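/- arXiv:math/0007181 — 6 statements merged into one kernel-verified Lean document; each statement's English description precedes it below -/
import Mathlib

section
/- Let r ≥ 1 and let n₁, …, n_r be natural numbers such that each nᵢ ≠ 1 and nᵢ divides nᵢ₊₁ for i = 1, …, r−1 (here ℤ/0ℤ = ℤ, so the case nᵢ = 0 gives a free factor). Let A = ℤ/n₁ℤ × ⋯ × ℤ/n_rℤ. Then the r-th exterior power ⋀^r(A) of A over ℤ is isomorphic, as a ℤ-module, to ℤ/n₁ℤ. -/
/-!
The idea: with `eᵢ` the standard generators of `A`, the top exterior power is generated by the
single element `ω = e₀ ∧ ⋯ ∧ e_{r-1}` (`exteriorPower_top_span`), and `n₀ • ω = 0` because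
`n₀ • e₀ = 0`. Every `nᵢ` is divisible by `n₀`, so the coordinates of `r` elements of `A` can be
reduced modulo `n₀`, and the determinant of the resulting square matrix over `ℤ/n₀` is an
alternating map (`detMod`). The linear map `⋀^r A → ℤ/n₀` it induces sends `ω` to `1`
(`detMod_single`), so it is surjective, and it is injective because `k • ω ↦ 0` forces `n₀ ∣ k`,
hence `k • ω = 0`.
-/

/-- The `r`-th exterior power of an abelian group generated by `r` elements is generated by
their wedge product: the only increasing map `Fin r → Fin r` is the identity. -/
lemma exteriorPower_top_span {M : Type*} [AddCommGroup M] {r : ℕ} (e : Fin r → M)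
    (he : Submodule.span ℤ (Set.range e) = ⊤) :
    Submodule.span ℤ {exteriorPower.ιMulti ℤ r e} = ⊤ := by
  rw [eq_top_iff, ← exteriorPower.ιMulti_family_span_of_span ℤ he, Submodule.span_le]
  rintro _ ⟨s, rfl⟩
  apply Submodule.mem_span_singleton.2
  refine ⟨1, ?_⟩
  rw [one_smul, exteriorPower.ιMulti_family]
  have hs : s.1 = Finset.univ := Finset.eq_univ_of_card _ (s.2.trans (Fintype.card_fin r).symm)
  have hid : id = s.1.orderEmbOfFin s.2 :=
    Finset.orderEmbOfFin_unique s.2 (fun x => hs ▸ Finset.mem_univ x) strictMono_id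
  rw [Set.powersetCard.ofFinEmbEquiv_symm_apply, ← hid, Function.comp_id]

/-- The determinant of `r` elements of `∏ᵢ ℤ/nᵢ`, with all coordinates reduced modulo a common
divisor `m` of the `nᵢ`, as an alternating map over `ℤ`. -/
noncomputable def detMod {r : ℕ} (n : Fin r → ℕ) (m : ℕ) (h : ∀ i, m ∣ n i) :
    (∀ i, ZMod (n i)) [⋀^Fin r]→ₗ[ℤ] ZMod m :=
  { (Matrix.detRowAlternating (R := ZMod m) (n := Fin r)).toMultilinearMap.restrictScalars ℤ with
    map_eq_zero_of_eq' := (Matrix.detRowAlternating (R := ZMod m)).map_eq_zero_of_eq' :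
      (Fin r → ZMod m) [⋀^Fin r]→ₗ[ℤ] ZMod m }.compLinearMap
    (LinearMap.pi fun i =>
      (ZMod.castHom (h i) (ZMod m)).toAddMonoidHom.toIntLinearMap ∘ₗ LinearMap.proj i)

lemma detMod_single {r : ℕ} (n : Fin r → ℕ) (m : ℕ) (h : ∀ i, m ∣ n i) :
    detMod n m h (fun i => Pi.single i 1) = 1 := by
  change Matrix.det (fun i j : Fin r =>
    ZMod.castHom (h j) (ZMod m) ((Pi.single i 1 : ∀ k, ZMod (n k)) j)) = 1
  rw [← Matrix.det_one (n := Fin r)]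
  congr 1
  funext i j
  by_cases hij : i = j
  · subst hij
    rw [Pi.single_eq_same, map_one, Matrix.one_apply_eq]
  · rw [Pi.single_eq_of_ne (Ne.symm hij), map_zero, Matrix.one_apply_ne hij]

lemma span_range_single {r : ℕ} (n : Fin r → ℕ) :
    Submodule.span ℤ (Set.range fun i => (Pi.single i 1 : ∀ k, ZMod (n k))) = ⊤ := by
  rw [eq_top_iff]
  intro x _
  rw [← Finset.univ_sum_single x]
  refine Submodule.sum_mem _ fun i _ => ?_
  obtain ⟨k, hk⟩ := ZMod.intCast_surjective (x i)
  have : Pi.single i (x i) = k • (Pi.single i 1 : ∀ k, ZMod (n k)) := by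
    rw [← Pi.single_smul, ← hk, zsmul_one]
  rw [this]
  exact Submodule.smul_mem _ _ (Submodule.subset_span ⟨i, rfl⟩)

/-- For `r ≥ 1` and `n₁, …, n_r` (0-indexed here as `n 0, …, n (r-1)`) with each
`nᵢ ≠ 1` and `nᵢ ∣ nᵢ₊₁`, the `r`-th exterior power (over `ℤ`) of
`A = ℤ/n₁ℤ × ⋯ × ℤ/n_rℤ` is isomorphic, as a `ℤ`-module, to `ℤ/n₁ℤ`. -/
theorem exteriorPower_top_of_product_of_cyclic (r : ℕ) (hr : 0 < r) (n : ℕ → ℕ)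
    (hn1 : ∀ i < r, n i ≠ 1) (hdvd : ∀ i, i + 1 < r → n i ∣ n (i + 1)) :
    Nonempty ((⋀[ℤ]^r (∀ i : Fin r, ZMod (n i.val))) ≃ₗ[ℤ] ZMod (n 0)) := by
  have h0 : ∀ i, i < r → n 0 ∣ n i := by
    intro i
    induction i with
    | zero => intro _; rfl
    | succ k ih => intro hk; exact (ih (by omega)).trans (hdvd k hk)
  set e : Fin r → (∀ i : Fin r, ZMod (n i.val)) := fun i => Pi.single i 1 with he
  set ω := exteriorPower.ιMulti ℤ r e with hω
  have hspan : Submodule.span ℤ {ω} = ⊤ :=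
    exteriorPower_top_span e (span_range_single fun i : Fin r => n i.val)
  have htors : ((n 0 : ℕ) : ℤ) • ω = 0 := by
    have hz : ((n 0 : ℕ) : ℤ) • e ⟨0, hr⟩ = 0 := by
      rw [he, ← Pi.single_smul]
      simp
    have h := (exteriorPower.ιMulti ℤ r).map_update_smul e ⟨0, hr⟩ ((n 0 : ℕ) : ℤ) (e ⟨0, hr⟩)
    rw [hz, Function.update_eq_self] at h
    rw [hω, ← h]
    exact (exteriorPower.ιMulti ℤ r).map_update_zero e ⟨0, hr⟩
  let D := exteriorPower.alternatingMapLinearEquiv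
    (detMod (fun i : Fin r => n i.val) (n 0) fun i => h0 i i.2)
  have hD : D ω = 1 := by
    rw [hω, exteriorPower.alternatingMapLinearEquiv_apply_ιMulti]
    exact detMod_single _ _ _
  refine ⟨LinearEquiv.ofBijective D ⟨?_, ?_⟩⟩
  · rw [← LinearMap.ker_eq_bot, LinearMap.ker_eq_bot']
    intro x hx
    obtain ⟨k, rfl⟩ := Submodule.mem_span_singleton.1 (hspan ▸ Submodule.mem_top : x ∈ _)
    rw [map_smul, hD, zsmul_one, ZMod.intCast_zmod_eq_zero_iff_dvd] at hx
    obtain ⟨l, rfl⟩ := hx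
    rw [mul_comm, mul_smul, htors, smul_zero]
  · intro y
    obtain ⟨k, rfl⟩ := ZMod.intCast_surjective y
    exact ⟨k • ω, by rw [map_smul, hD, zsmul_one]⟩
end

section
/- Let A be a finite abelian group that is generated by 2r elements, and let ω : A × A → ℚ/ℤ be a ℤ-bilinear form that is alternating (ω(a, a) = 0 for all a ∈ A) and non-degenerate (if ω(a, b) = 0 for all b ∈ A then a = 0). Let ψ : A → A be a group automorphism preserving ω, i.e. ω(ψ(a), ψ(b)) = ω(a, b) for all a, b ∈ A. Then the induced endomorphism ⋀^{2r}(ψ) of the 2r-th exterior power ⋀^{2r}(A) is the identity map. -/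
/-!
Lift `ω` to an integral skew-symmetric form on `ℤ^{2r}`, via `k ↦ k/N` with `N • A = 0`, and split
this lattice into `r` mutually orthogonal planes. This yields generators `t` of `A`, indexed by
`Fin r × Bool`, whose Gram matrix is the image of a block-diagonal integral matrix `G` with blocks
`[0, d i; -d i, 0]` (`exists_symplectic_generators`). Write `d i = h i * c i`, `N = h i * n' i` with
`h i = gcd (d i) N`. By non-degeneracy `n' i` kills `t (i, false)`, so the order `n` of the
generator `⋀ t` of `⋀^{2r} A` divides every `n' i`.

If `M` is an integral matrix of `ψ` in the generators `t`, then `Mᵀ G M = G + N E` with `E` integral,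
and `ψ` acts on `⋀^{2r} A` as multiplication by `det M`. Taking Pfaffians,
`det M * ∏ d i = Pf (G + N E)`, and each term of `Pf (G + N E)` is congruent to the corresponding term
of `Pf G = ∏ d i` modulo `n * ∏ h i` (`dvd_pfTerm_sub`). Cancelling `∏ h i`, and then `∏ c i`, which is
prime to `n`, gives `det M ≡ 1 mod n` (`dvd_det_sub_one`).

The determinant alone would only give `(det M)² ≡ 1`, so the Pfaffian is needed, as an integer not
multiplied by `2^r r!`. It is obtained by summing over cosets of the subgroup of permutations that
leave each term of the sum invariant; the identity `Pf (Mᵀ G M) = det M * Pf G` comes from the sum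
over all permutations, which is the alternatization of `v ↦ ∏ i, B (v (i, false)) (v (i, true))`.
-/

/-! ### Pfaffians -/

/-- The term of the permutation `σ` in the Pfaffian of `G`. The index set `Fin r × Bool` carries the
reference matching `(i, false) ↔ (i, true)`, so no ordering is needed. -/
def pfTerm {r : ℕ} (G : Fin r × Bool → Fin r × Bool → ℤ) (σ : Equiv.Perm (Fin r × Bool)) : ℤ :=
  (Equiv.Perm.sign σ : ℤ) * ∏ i, G (σ (i, false)) (σ (i, true))

/-- Transformation rule for the sum of the Pfaffian terms over all permutations: this sum is the value
on the standard basis of an alternating map, which scales by the determinant. -/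
lemma sum_pfTerm_mul {r : ℕ} (G : Matrix (Fin r × Bool) (Fin r × Bool) ℤ)
    (M : Matrix (Fin r × Bool) (Fin r × Bool) ℤ) :
    ∑ σ, pfTerm (M.transpose * G * M) σ = M.det * ∑ σ, pfTerm G σ := by
  classical
  let B := Matrix.toBilin' G
  -- Changing the vector at `(j, c)` affects only the `j`-th factor.
  have key : ∀ [DecidableEq (Fin r × Bool)] (v : Fin r × Bool → Fin r × Bool → ℤ) (j : Fin r)
      (c : Bool) (z : Fin r × Bool → ℤ),
      ∏ i, B (Function.update v (j, c) z (i, false)) (Function.update v (j, c) z (i, true)) =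
        B (Function.update v (j, c) z (j, false)) (Function.update v (j, c) z (j, true)) *
          ∏ i ∈ Finset.univ.erase j, B (v (i, false)) (v (i, true)) := by
    intro _ v j c z
    rw [← Finset.mul_prod_erase _ _ (Finset.mem_univ j)]
    congr 1
    refine Finset.prod_congr rfl fun i hi => ?_
    have hij : i ≠ j := Finset.ne_of_mem_erase hi
    rw [Function.update_of_ne (by simp [hij]), Function.update_of_ne (by simp [hij])]
  let m : MultilinearMap ℤ (fun _ : Fin r × Bool => (Fin r × Bool → ℤ)) ℤ :=
    { toFun := fun v => ∏ i, B (v (i, false)) (v (i, true))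
      map_update_add' := by
        intro _ v p x y
        obtain ⟨j, c⟩ := p
        rw [key, key, key, ← add_mul]
        congr 1
        cases c <;> simp
      map_update_smul' := by
        intro _ v p a x
        obtain ⟨j, c⟩ := p
        rw [key, key, smul_eq_mul, ← mul_assoc]
        congr 1
        cases c <;> simp only [Function.update_self, ne_eq, Prod.mk.injEq, Bool.true_eq_false,
          Bool.false_eq_true, and_false, not_false_eq_true, Function.update_of_ne, map_smul,
          LinearMap.smul_apply, smul_eq_mul] }
  have hval : ∀ v, MultilinearMap.alternatization m v = ∑ σ, pfTerm (fun p q => B (v p) (v q)) σ := by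
    intro v
    rw [MultilinearMap.alternatization_apply]
    refine Finset.sum_congr rfl fun σ _ => ?_
    simp [pfTerm, m, Units.smul_def]
  have h := DFunLike.congr_fun (AlternatingMap.eq_smul_basis_det (Pi.basisFun ℤ (Fin r × Bool))
    (MultilinearMap.alternatization m)) (fun p q => M q p)
  have h' : MultilinearMap.alternatization m (fun p q => M q p) =
      MultilinearMap.alternatization m (Pi.basisFun ℤ (Fin r × Bool)) *
        (Pi.basisFun ℤ (Fin r × Bool)).det (fun p q => M q p) := h
  rw [hval, hval, Pi.basisFun_det_apply] at h'
  have e1 : (fun p q => B (fun k => M k p) (fun k => M k q)) = M.transpose * G * M := by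
    ext p q
    simp [B, Matrix.toBilin'_apply', Matrix.mul_apply, dotProduct, Matrix.mulVec, Finset.sum_mul,
      Finset.mul_sum]
    rw [Finset.sum_comm]
    refine Finset.sum_congr rfl fun i _ => Finset.sum_congr rfl fun j _ => by ring
  have e2 : (fun p q => B (Pi.basisFun ℤ (Fin r × Bool) p) (Pi.basisFun ℤ (Fin r × Bool) q)) = G := by
    ext p q
    simp [B]
  rw [e1, e2] at h'
  rw [h', mul_comm]
  congr 1
  exact Matrix.det_transpose M

/-- A fibre of the first projection has only two elements, so a permutation sending the pair of `i`
onto a fibre sends nothing else there. -/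
lemma eq_of_fst_eq {r : ℕ} (w : Equiv.Perm (Fin r × Bool)) {i j : Fin r}
    (hi : (w (i, true)).1 = (w (i, false)).1) (hij : (w (i, false)).1 = (w (j, false)).1) :
    i = j := by
  by_contra hne
  have h1 : w (i, false) ≠ w (i, true) := fun h => by simpa using w.injective h
  have h2 : w (i, false) ≠ w (j, false) := fun h => hne (by simpa using w.injective h)
  have h3 : w (i, true) ≠ w (j, false) := fun h => by simpa using w.injective h
  rw [Ne, Prod.ext_iff] at h1 h2 h3
  revert h1 h2 h3
  rw [hi, hij]
  cases (w (i, false)).2 <;> cases (w (i, true)).2 <;> cases (w (j, false)).2 <;> simp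

/-- Right translation by a permutation that respects the reference matching does not change the
Pfaffian terms of a skew-symmetric form: such a `w` is a permutation `π` of the pairs, even on
`Fin r × Bool`, composed with swaps inside pairs, whose signs cancel those from skew-symmetry. -/
lemma pfTerm_mul_of_pair {r : ℕ} (w : Equiv.Perm (Fin r × Bool))
    (hw : ∀ i, (w (i, true)).1 = (w (i, false)).1)
    (G : Fin r × Bool → Fin r × Bool → ℤ) (hG : ∀ p q, G p q = - G q p)
    (σ : Equiv.Perm (Fin r × Bool)) : pfTerm G (σ * w) = pfTerm G σ := by
  classical
  have hinj : Function.Injective (fun i => (w (i, false)).1) :=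
    fun i _ hij => eq_of_fst_eq w (hw i) hij
  let π : Equiv.Perm (Fin r) := Equiv.ofBijective _ (Finite.injective_iff_bijective.mp hinj)
  let ε : Fin r → Equiv.Perm Bool := fun i => if (w (i, false)).2 then Equiv.swap false true else 1
  have hwe : w = Equiv.prodCongrLeft (fun _ : Bool => π) * Equiv.prodCongrRight ε := by
    ext1 ⟨i, b⟩
    have h1 : w (i, false) ≠ w (i, true) := fun h => by simpa using w.injective h
    have hi := hw i
    rw [Ne, Prod.ext_iff] at h1
    rw [Equiv.Perm.mul_apply, Equiv.prodCongrRight_apply, Equiv.prodCongrLeft_apply]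
    change w (i, b) = ((w (i, false)).1, ε i b)
    cases b
    · ext1
      · rfl
      · simp only [ε]
        cases (w (i, false)).2 <;> simp
    · ext1
      · exact hi
      · simp only [ε]
        revert h1
        rw [hi]
        cases (w (i, false)).2 <;> cases (w (i, true)).2 <;> simp
  have hsw : (Equiv.Perm.sign w : ℤ) = ∏ i, (Equiv.Perm.sign (ε i) : ℤ) := by
    rw [hwe, Equiv.Perm.sign_mul, Equiv.Perm.sign_prodCongrLeft, Equiv.Perm.sign_prodCongrRight]
    simp
  have hterm : ∀ i, G ((σ * w) (i, false)) ((σ * w) (i, true)) =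
      (Equiv.Perm.sign (ε i) : ℤ) * G (σ (π i, false)) (σ (π i, true)) := by
    intro i
    have hb : ∀ b, w (i, b) = (π i, ε i b) := by
      intro b
      conv_lhs => rw [hwe]
      rfl
    rw [Equiv.Perm.mul_apply, Equiv.Perm.mul_apply, hb, hb]
    simp only [ε]
    cases (w (i, false)).2
    · simp
    · simp only [if_true, Equiv.swap_apply_left, Equiv.swap_apply_right]
      rw [hG, Equiv.Perm.sign_swap (by simp)]
      simp
  have hreindex := Equiv.prod_comp π (fun i => G (σ (i, false)) (σ (i, true)))
  have hsq : (∏ i, (Equiv.Perm.sign (ε i) : ℤ)) * (∏ i, (Equiv.Perm.sign (ε i) : ℤ)) = 1 := by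
    rw [← Finset.prod_mul_distrib]
    refine Finset.prod_eq_one fun i _ => ?_
    rw [← Units.val_mul, Int.units_mul_self, Units.val_one]
  unfold pfTerm
  rw [Finset.prod_congr rfl fun i _ => hterm i, Finset.prod_mul_distrib, hreindex,
    Equiv.Perm.sign_mul, Units.val_mul, hsw]
  linear_combination ((Equiv.Perm.sign σ : ℤ) * ∏ i, G (σ (i, false)) (σ (i, true))) * hsq

/-- The permutations whose right translation fixes the Pfaffian terms of every skew-symmetric form.
It contains the permutations respecting the reference matching, by `pfTerm_mul_of_pair`; defining
it by invariance makes the subgroup axioms immediate. -/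
def pairSubgroup (r : ℕ) : Subgroup (Equiv.Perm (Fin r × Bool)) where
  carrier := {w | ∀ G : Fin r × Bool → Fin r × Bool → ℤ, (∀ p q, G p q = - G q p) →
    ∀ σ, pfTerm G (σ * w) = pfTerm G σ}
  one_mem' := by intro G _ σ; simp
  mul_mem' := by
    intro a b ha hb G hG σ
    rw [← mul_assoc, hb G hG, ha G hG]
  inv_mem' := by
    intro a ha G hG σ
    rw [← ha G hG (σ * a⁻¹), inv_mul_cancel_right]

noncomputable instance (r : ℕ) : Fintype (Equiv.Perm (Fin r × Bool) ⧸ pairSubgroup r) :=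
  Fintype.ofFinite _

/-- The Pfaffian: one term for each coset of `pairSubgroup r`. For a skew-symmetric form the choice of
representatives does not matter. -/
noncomputable def pf {r : ℕ} (G : Fin r × Bool → Fin r × Bool → ℤ) : ℤ :=
  ∑ q : Equiv.Perm (Fin r × Bool) ⧸ pairSubgroup r, pfTerm G q.out

lemma sum_pfTerm_eq {r : ℕ} (G : Fin r × Bool → Fin r × Bool → ℤ) (hG : ∀ p q, G p q = - G q p) :
    ∑ σ, pfTerm G σ = (Nat.card (pairSubgroup r) : ℤ) * pf G := by
  classical
  have : Fintype (pairSubgroup r) := Fintype.ofFinite _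
  rw [← Equiv.sum_comp (Subgroup.groupEquivQuotientProdSubgroup (s := pairSubgroup r)).symm,
    Fintype.sum_prod_type, pf, Finset.mul_sum]
  refine Finset.sum_congr rfl fun q _ => ?_
  have : ∀ w : pairSubgroup r, pfTerm G
      ((Subgroup.groupEquivQuotientProdSubgroup (s := pairSubgroup r)).symm (q, w)) =
      pfTerm G q.out := fun w => by
    set g := (Subgroup.groupEquivQuotientProdSubgroup (s := pairSubgroup r)).symm (q, w) with hg
    have hq : (g : Equiv.Perm (Fin r × Bool) ⧸ pairSubgroup r) = q := by
      have h1 : (Subgroup.groupEquivQuotientProdSubgroup (s := pairSubgroup r)) g = (q, w) := by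
        simp [hg]
      exact congrArg Prod.fst h1
    have hmem : q.out⁻¹ * g ∈ pairSubgroup r :=
      QuotientGroup.eq.mp ((QuotientGroup.out_eq' q).trans hq.symm)
    rw [← hmem G hG q.out, mul_inv_cancel_left]
  rw [Finset.sum_congr rfl fun w _ => this w]
  simp

lemma pf_mul {r : ℕ} (G : Matrix (Fin r × Bool) (Fin r × Bool) ℤ) (hG : ∀ p q, G p q = - G q p)
    (M : Matrix (Fin r × Bool) (Fin r × Bool) ℤ) :
    pf (M.transpose * G * M) = M.det * pf G := by
  have h := sum_pfTerm_mul G M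
  have hG' : G.transpose = - G := by ext p q; simp [hG q p]
  have hX : ∀ p q, (M.transpose * G * M) p q = - (M.transpose * G * M) q p := by
    have : (M.transpose * G * M).transpose = - (M.transpose * G * M) := by
      simp [Matrix.transpose_mul, hG', Matrix.mul_assoc]
    intro p q
    rw [← Matrix.transpose_apply (M.transpose * G * M) p q, this, Matrix.neg_apply, neg_neg]
  rw [sum_pfTerm_eq _ hX, sum_pfTerm_eq _ hG] at h
  have hc : (Nat.card (pairSubgroup r) : ℤ) ≠ 0 := by exact_mod_cast Nat.card_pos.ne'
  exact mul_left_cancel₀ hc (by rw [h]; ring)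

/-- The block-diagonal skew-symmetric form with blocks `[0, d i; -d i, 0]`. -/
def stdForm {r : ℕ} (d : Fin r → ℤ) (p q : Fin r × Bool) : ℤ :=
  if p.1 = q.1 then (if p.2 = q.2 then 0 else if p.2 then - d p.1 else d p.1) else 0

lemma stdForm_skew {r : ℕ} (d : Fin r → ℤ) (p q : Fin r × Bool) :
    stdForm d p q = - stdForm d q p := by
  obtain ⟨i, b⟩ := p
  obtain ⟨j, c⟩ := q
  unfold stdForm
  by_cases h : i = j
  · subst h; cases b <;> cases c <;> simp
  · simp [h, Ne.symm h]

/-- Only the trivial coset contributes: a permutation with non-zero term respects the matching. -/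
lemma pf_stdForm {r : ℕ} (d : Fin r → ℤ) : pf (stdForm d) = ∏ i, d i := by
  classical
  unfold pf
  rw [Finset.sum_eq_single (((1 : Equiv.Perm (Fin r × Bool)) : Equiv.Perm (Fin r × Bool) ⧸ pairSubgroup r))]
  · have h1 : ((1 : Equiv.Perm (Fin r × Bool)) : Equiv.Perm (Fin r × Bool) ⧸ pairSubgroup r).out ∈
        pairSubgroup r := by
      have := QuotientGroup.eq.mp (QuotientGroup.out_eq'
        ((1 : Equiv.Perm (Fin r × Bool)) : Equiv.Perm (Fin r × Bool) ⧸ pairSubgroup r)).symm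
      simpa using this
    have := h1 (stdForm d) (stdForm_skew d) 1
    rw [one_mul] at this
    rw [this]
    simp [pfTerm, stdForm]
  · intro q _ hq
    by_contra hne
    apply hq
    have hmem : q.out ∈ pairSubgroup r := by
      intro G hG σ
      refine pfTerm_mul_of_pair _ (fun i => ?_) G hG σ
      by_contra hi
      apply hne
      unfold pfTerm
      rw [Finset.prod_eq_zero (Finset.mem_univ i), mul_zero]
      simp [stdForm, Ne.symm hi]
    rw [← QuotientGroup.out_eq' q]
    refine (QuotientGroup.eq.mpr ?_).symm
    simpa using hmem
  · simp

/-! ### Block-diagonalization of integral skew-symmetric forms -/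

lemma exists_spanning_pairs {V : Type*} [AddCommGroup V] [Module.Free ℤ V] [Module.Finite ℤ V]
    {r : ℕ} (h : Module.finrank ℤ V ≤ 2 * r) :
    ∃ b : Fin r × Bool → V, Submodule.span ℤ (Set.range b) = ⊤ := by
  have hc : Fintype.card (Fin (Module.finrank ℤ V)) ≤ Fintype.card (Fin r × Bool) := by
    simp; omega
  obtain ⟨f⟩ := Function.Embedding.nonempty_of_card_le hc
  let e := Module.finBasis ℤ V
  refine ⟨Function.extend f e 0, top_le_iff.mp ?_⟩
  rw [← e.span_eq]
  refine Submodule.span_mono ?_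
  rintro _ ⟨i, rfl⟩
  exact ⟨f i, f.injective.extend_apply _ _ _⟩

/-- A non-zero value of least absolute value divides the other values in its row and column. -/
lemma exists_pair_split {V : Type*} [AddCommGroup V]
    (B : V →ₗ[ℤ] V →ₗ[ℤ] ℤ) (hB : ∀ x y, B x y = - B y x) (h0 : ∃ x y, B x y ≠ 0) :
    ∃ x y, B x y ≠ 0 ∧ (∀ z, B x y ∣ B x z) ∧ (∀ z, B x y ∣ B y z) := by
  classical
  have hex : ∃ n : ℕ, ∃ x y, B x y ≠ 0 ∧ (B x y).natAbs = n := by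
    obtain ⟨x, y, h⟩ := h0
    exact ⟨_, x, y, h, rfl⟩
  obtain ⟨x, y, hne, hn⟩ := Nat.find_spec hex
  have hmin : ∀ a b, (B a b).natAbs < (B x y).natAbs → B a b = 0 := by
    intro a b hab
    by_contra hne'
    exact Nat.find_min hex (hn ▸ hab) ⟨a, b, hne', rfl⟩
  have hxx : ∀ x, B x x = 0 := fun x => by have := hB x x; omega
  refine ⟨x, y, hne, fun z => ?_, fun z => ?_⟩
  · have h1 : B x (z - (B x z / B x y) • y) = B x z % B x y := by
      rw [map_sub, map_smul, smul_eq_mul, Int.emod_def, mul_comm]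
    have h2 := hmin x (z - (B x z / B x y) • y) (by
      rw [h1]
      have := Int.emod_nonneg (B x z) hne
      have := Int.emod_lt_abs (B x z) hne
      rw [Int.abs_eq_natAbs] at this
      omega)
    exact Int.dvd_of_emod_eq_zero (h1 ▸ h2)
  · have h1 : B y (z + (B y z / B x y) • x) = B y z % B x y := by
      rw [map_add, map_smul, smul_eq_mul, Int.emod_def, hB y x]
      ring
    have h2 := hmin y (z + (B y z / B x y) • x) (by
      rw [h1]
      have := Int.emod_nonneg (B y z) hne
      have := Int.emod_lt_abs (B y z) hne
      rw [Int.abs_eq_natAbs] at this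
      omega)
    exact Int.dvd_of_emod_eq_zero (h1 ▸ h2)

/-- Block-diagonalization of a skew-symmetric form, by splitting off `⟨x, y⟩` for a pair as in
`exists_pair_split` and continuing in its orthogonal complement. Only a spanning family is asked
for, so that a rank bound suffices and the family may be padded by zeros. -/
lemma exists_block_spanning (r : ℕ) : ∀ {V : Type*} [AddCommGroup V] [Module.Free ℤ V]
    [Module.Finite ℤ V] (_ : Module.finrank ℤ V ≤ 2 * r)
    (B : V →ₗ[ℤ] V →ₗ[ℤ] ℤ) (_ : ∀ x y, B x y = - B y x),
    ∃ b : Fin r × Bool → V, Submodule.span ℤ (Set.range b) = ⊤ ∧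
      ∀ p q, p.1 ≠ q.1 → B (b p) (b q) = 0 := by
  induction r with
  | zero =>
    intro V _ _ _ h B hB
    obtain ⟨b, hb⟩ := exists_spanning_pairs h
    exact ⟨b, hb, fun p => p.1.elim0⟩
  | succ r ih =>
    intro V _ _ _ h B hB
    by_cases h0 : ∃ x y, B x y ≠ 0
    swap
    · push Not at h0
      obtain ⟨b, hb⟩ := exists_spanning_pairs h
      exact ⟨b, hb, fun p q _ => h0 _ _⟩
    obtain ⟨x, y, hne, hx, hy⟩ := exists_pair_split B hB h0
    have hxx : ∀ x, B x x = 0 := fun x => by have := hB x x; omega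
    let Φ : V →ₗ[ℤ] ℤ × ℤ := (B x).prod (B y)
    let W := LinearMap.ker Φ
    have hW : ∀ w, w ∈ W ↔ B x w = 0 ∧ B y w = 0 := fun w => by
      simp [W, Φ, LinearMap.mem_ker]
    have hrank : Module.finrank ℤ W ≤ 2 * r := by
      have h1 : Module.finrank ℤ (LinearMap.range Φ) + Module.finrank ℤ W = Module.finrank ℤ V := by
        rw [← Submodule.finrank_quotient_add_finrank W]
        congr 1
        exact (LinearEquiv.finrank_eq Φ.quotKerEquivRange).symm
      have h2 : Module.finrank ℤ (ℤ × ℤ) ≤ Module.finrank ℤ (LinearMap.range Φ) := by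
        let g : ℤ × ℤ →ₗ[ℤ] LinearMap.range Φ :=
          Φ.rangeRestrict ∘ₗ ((LinearMap.toSpanSingleton ℤ V x).coprod
            (LinearMap.toSpanSingleton ℤ V y))
        refine LinearMap.finrank_le_finrank_of_injective (f := g) ?_
        rw [← LinearMap.ker_eq_bot, LinearMap.ker_eq_bot']
        rintro ⟨a, b⟩ hab
        have := congrArg Subtype.val hab
        simpa [g, Φ, hxx, hB y x, hne, and_comm] using this
      have h3 : Module.finrank ℤ (ℤ × ℤ) = 2 := by simp
      omega
    obtain ⟨b, hb, hbo⟩ := ih hrank (B.domRestrict₁₂ W W) (fun u v => hB u v)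
    refine ⟨fun p => Fin.cases (if p.2 then y else x) (fun i => (b (i, p.2) : V)) p.1, ?_, ?_⟩
    · rw [Submodule.eq_top_iff']
      intro z
      set S := Submodule.span ℤ (Set.range fun p : Fin (r + 1) × Bool =>
        (Fin.cases (if p.2 then y else x) (fun i => (b (i, p.2) : V)) p.1 : V)) with hS
      have hxS : x ∈ S := Submodule.subset_span ⟨(0, false), by simp⟩
      have hyS : y ∈ S := Submodule.subset_span ⟨(0, true), by simp⟩
      have hWS : W ≤ S := by
        have : W = (Submodule.span ℤ (Set.range b)).map W.subtype := by simp [hb]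
        rw [this, Submodule.map_span, Submodule.span_le]
        rintro _ ⟨_, ⟨p, rfl⟩, rfl⟩
        exact Submodule.subset_span ⟨(p.1.succ, p.2), by simp⟩
      obtain ⟨α, hα⟩ := hx z
      obtain ⟨β, hβ⟩ := hy z
      have hz : z - α • y + β • x ∈ W := by
        rw [hW]
        constructor
        · simp [hxx, hα]; ring
        · simp [hxx, hβ, hB y x]; ring
      have : z = (z - α • y + β • x) + α • y - β • x := by abel
      rw [this]
      exact S.sub_mem (S.add_mem (hWS hz) (S.smul_mem _ hyS)) (S.smul_mem _ hxS)
    · have hxW : ∀ (c : Bool) (w : W), B (if c then y else x) w = 0 := by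
        intro c w
        have := (hW w).mp w.2
        cases c <;> simp [this]
      rintro ⟨i, c⟩ ⟨j, e⟩ hij
      induction i using Fin.cases with
      | zero =>
        induction j using Fin.cases with
        | zero => exact absurd rfl hij
        | succ j => exact hxW c (b (j, e))
      | succ i =>
        induction j using Fin.cases with
        | zero => exact (hB _ _).trans (neg_eq_zero.mpr (hxW e (b (i, c))))
        | succ j => exact hbo (i, c) (j, e) (fun h => hij (congrArg Fin.succ h))

/-! ### The congruence for the determinant -/

/-- Termwise congruence `Pf (G + N E) ≡ Pf G` modulo `n * ∏ h i`, for `G = stdForm (h * c)`. -/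
lemma dvd_pfTerm_sub {r : ℕ} (h c n' : Fin r → ℤ) (N n : ℤ) (hN : ∀ i, N = h i * n' i)
    (hn : ∀ i, n ∣ n' i) (E : Fin r × Bool → Fin r × Bool → ℤ) (σ : Equiv.Perm (Fin r × Bool)) :
    (∏ i, h i) * n ∣ pfTerm (fun p q => stdForm (fun i => h i * c i) p q + N * E p q) σ -
      pfTerm (stdForm fun i => h i * c i) σ := by
  classical
  -- `S` is the set of `i` for which `σ` maps the pair of `i` onto a pair; off `S` the entry of `G`
  -- vanishes. As `N` is divisible by every `h j * n`, the remaining pairs may be matched with the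
  -- unused indices `j` arbitrarily: `g` is such an extension to a permutation.
  let S : Finset (Fin r) := {i | (σ (i, true)).1 = (σ (i, false)).1}
  have hS : ∀ i, i ∈ S ↔ (σ (i, true)).1 = (σ (i, false)).1 := fun i => by simp [S]
  have hinj : Set.InjOn (fun i => (σ (i, false)).1) (S : Set (Fin r)) := by
    intro i hi j _ hij
    exact eq_of_fst_eq σ ((hS i).mp hi) hij
  obtain ⟨g, hg⟩ := Finset.exists_equiv_extend_of_card_eq (t := (Finset.univ : Finset (Fin r)))
    (by simp) (Finset.subset_univ _) hinj
  have hprod : ∏ i, h (g i) = ∏ i, h i := by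
    rw [Equiv.prod_comp g (fun x => h x), Finset.prod_coe_sort]
  have hG : ∀ i, ∃ a, stdForm (fun i => h i * c i) (σ (i, false)) (σ (i, true)) = h (g i) * a := by
    intro i
    by_cases hi : i ∈ S
    · rw [hg i hi]
      unfold stdForm
      split_ifs
      · exact ⟨0, by simp⟩
      · exact ⟨- c _, by ring⟩
      · exact ⟨_, rfl⟩
      · exact ⟨0, by simp⟩
    · refine ⟨0, ?_⟩
      rw [hS] at hi
      simp [stdForm, Ne.symm hi]
  choose a ha using hG
  choose m hm using hn
  have hX : ∀ i, stdForm (fun i => h i * c i) (σ (i, false)) (σ (i, true)) +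
      N * E (σ (i, false)) (σ (i, true)) =
      h (g i) * (a i + n * (m (g i) * E (σ (i, false)) (σ (i, true)))) := by
    intro i
    rw [ha, hN (g i)]
    conv_lhs => rw [hm (g i)]
    ring
  unfold pfTerm
  rw [Finset.prod_congr rfl fun i _ => hX i, Finset.prod_congr rfl fun i _ => ha i,
    Finset.prod_mul_distrib, Finset.prod_mul_distrib, hprod, ← mul_sub, ← mul_sub]
  refine Dvd.dvd.mul_left (mul_dvd_mul_left _ ?_) _
  refine Int.ModEq.dvd (Int.ModEq.prod fun i _ => ?_)
  exact (Int.modEq_iff_dvd.mpr (by simp))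

/-- If `M` preserves `stdForm (h * c)` modulo `N`, then `det M ≡ 1` modulo every common divisor `n` of
the `n' i = N / h i`. -/
lemma dvd_det_sub_one {r : ℕ} (h c n' : Fin r → ℤ) (N n : ℤ) (hh : ∀ i, h i ≠ 0)
    (hN : ∀ i, N = h i * n' i) (hc : ∀ i, IsCoprime (n' i) (c i))
    (hn : ∀ i, n ∣ n' i) (M E : Matrix (Fin r × Bool) (Fin r × Bool) ℤ)
    (hE : M.transpose * Matrix.of (stdForm fun i => h i * c i) * M =
      Matrix.of (stdForm fun i => h i * c i) + N • E) : n ∣ M.det - 1 := by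
  have h1 := pf_mul (Matrix.of (stdForm fun i => h i * c i)) (fun p q => stdForm_skew (fun i => h i * c i) p q) M
  rw [hE] at h1
  have h2 : (∏ i, h i) * n ∣ pf (fun p q => stdForm (fun i => h i * c i) p q + N * E p q) -
      pf (stdForm fun i => h i * c i) := by
    unfold pf
    rw [← Finset.sum_sub_distrib]
    exact Finset.dvd_sum fun q _ => dvd_pfTerm_sub h c n' N n hN hn E _
  have h3 : pf (fun p q => stdForm (fun i => h i * c i) p q + N * E p q) =
      M.det * pf (stdForm fun i => h i * c i) := h1
  rw [h3, pf_stdForm, Finset.prod_mul_distrib] at h2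
  have h4 : (∏ i, h i) * n ∣ (∏ i, h i) * ((M.det - 1) * ∏ i, c i) := by
    convert h2 using 1
    ring
  have h5 := (mul_dvd_mul_iff_left (Finset.prod_ne_zero_iff.mpr fun i _ => hh i)).mp h4
  refine IsCoprime.dvd_of_dvd_mul_right (IsCoprime.prod_right fun i _ => ?_) h5
  exact (hc i).of_isCoprime_of_dvd_left (hn i)

/-! ### Passage to the group `A` -/

/-- Linear substitution in an alternating map multiplies it by the determinant; `t` need not be
linearly independent. -/
lemma alternatingMap_linearCombination {ι A X : Type*} [Fintype ι] [DecidableEq ι]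
    [AddCommGroup A] [AddCommGroup X] (f : A [⋀^ι]→ₗ[ℤ] X) (t : ι → A) (M : Matrix ι ι ℤ) :
    f (fun q => ∑ p, M p q • t p) = M.det • f t := by
  let e := Pi.basisFun ℤ ι
  let g := f.compLinearMap (Fintype.linearCombination ℤ t)
  have hge : g e = f t := by
    change f _ = f t
    congr 1
    ext i
    simp [e]
  have hg : g = (LinearMap.toSpanSingleton ℤ X (g e)).compAlternatingMap e.det := by
    refine Module.Basis.ext_alternating e fun v hv => ?_
    let σ : Equiv.Perm ι := Equiv.ofBijective v (Finite.injective_iff_bijective.mp hv)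
    have hσ : (fun i => e (v i)) = fun i => e (σ i) := rfl
    rw [hσ]
    change g (e ∘ σ) = e.det (e ∘ σ) • g e
    rw [AlternatingMap.map_perm, AlternatingMap.map_perm, e.det_self, Units.smul_def,
      Units.smul_def, smul_assoc, one_smul]
  have h := DFunLike.congr_fun hg (fun q p => M p q)
  have h1 : g (fun q p => M p q) = f (fun q => ∑ p, M p q • t p) := by
    change f _ = f _
    congr 1
  have h2 : e.det (fun q p => M p q) = M.det := by
    rw [Pi.basisFun_det_apply]
    exact Matrix.det_transpose M
  rw [← h1, h]
  change e.det _ • g e = _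
  rw [h2, hge]

/-- The map `k ↦ k / N` from `ℤ` to `ℚ/ℤ`. -/
def divHom (N : ℕ) : ℤ →ₗ[ℤ] AddCircle (1 : ℚ) :=
  LinearMap.toSpanSingleton ℤ _ (((1 / N : ℚ)) : AddCircle (1 : ℚ))

lemma divHom_apply (N : ℕ) (k : ℤ) : divHom N k = ((k / N : ℚ) : AddCircle (1 : ℚ)) := by
  rw [divHom, LinearMap.toSpanSingleton_apply, ← AddCircle.coe_zsmul]
  congr 1
  rw [zsmul_eq_mul]
  ring

lemma divHom_eq_zero {N : ℕ} (hN : N ≠ 0) {k : ℤ} : divHom N k = 0 ↔ (N : ℤ) ∣ k := by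
  have hN' : (N : ℚ) ≠ 0 := by exact_mod_cast hN
  rw [divHom_apply, AddCircle.coe_eq_zero_iff]
  constructor
  · rintro ⟨n, hn⟩
    refine ⟨n, ?_⟩
    rw [eq_div_iff hN'] at hn
    have : (k : ℚ) = ((N * n : ℤ) : ℚ) := by push_cast; rw [← hn]; simp [mul_comm]
    exact_mod_cast this
  · rintro ⟨n, rfl⟩
    refine ⟨n, ?_⟩
    push_cast
    field_simp
    simp

lemma exists_divHom_eq {N : ℕ} (hN : N ≠ 0) (u : AddCircle (1 : ℚ)) (hu : (N : ℤ) • u = 0) :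
    ∃ k, divHom N k = u := by
  have hN' : (N : ℚ) ≠ 0 := by exact_mod_cast hN
  obtain ⟨x, rfl⟩ := QuotientAddGroup.mk_surjective u
  change (N : ℤ) • ((x : ℚ) : AddCircle (1 : ℚ)) = 0 at hu
  rw [← AddCircle.coe_zsmul, AddCircle.coe_eq_zero_iff] at hu
  obtain ⟨n, hn⟩ := hu
  refine ⟨n, ?_⟩
  rw [divHom_apply]
  change ((_ : ℚ) : AddCircle (1 : ℚ)) = ((x : ℚ) : AddCircle (1 : ℚ))
  congr 1
  rw [div_eq_iff hN']
  simpa [mul_comm] using hn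

/-- Generators of `A` in symplectic position. The `d i` are arbitrary integers: no divisibility chain
is required. -/
lemma exists_symplectic_generators {A : Type*} [AddCommGroup A] {N : ℕ} (hN : N ≠ 0)
    (hNA : ∀ a : A, (N : ℤ) • a = 0) {r : ℕ} (s : Fin (2 * r) → A)
    (hs : Submodule.span ℤ (Set.range s) = ⊤) (ω : A →ₗ[ℤ] A →ₗ[ℤ] AddCircle (1 : ℚ))
    (halt : ∀ a : A, ω a a = 0) :
    ∃ (t : Fin r × Bool → A) (d : Fin r → ℤ), Submodule.span ℤ (Set.range t) = ⊤ ∧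
      ∀ p q, ω (t p) (t q) = divHom N (stdForm d p q) := by
  classical
  have hskew : ∀ a b, ω a b = - ω b a := fun a b => (LinearMap.IsAlt.neg halt b a).symm
  have hk : ∀ i j, ∃ k, divHom N k = ω (s i) (s j) := fun i j =>
    exists_divHom_eq hN _ (by rw [← map_smul, hNA, map_zero])
  choose k hk using hk
  -- Lifting only the entries above the diagonal makes the integral Gram matrix skew-symmetric.
  let G : Matrix (Fin (2 * r)) (Fin (2 * r)) ℤ :=
    fun i j => if i < j then k i j else if j < i then - k j i else 0
  have hG : ∀ i j, divHom N (G i j) = ω (s i) (s j) := by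
    intro i j
    rcases lt_trichotomy i j with h | rfl | h
    · simp [G, h, hk]
    · simp [G, halt]
    · simp only [G, h, not_lt_of_gt h, if_true, if_false]
      rw [map_neg, hk, ← hskew]
  have hGs : ∀ i j, G i j = - G j i := by
    intro i j
    rcases lt_trichotomy i j with h | rfl | h
    · simp [G, h, not_lt_of_gt h]
    · simp [G]
    · simp [G, h, not_lt_of_gt h]
  let B := Matrix.toBilin' G
  have hB : ∀ x y, B x y = - B y x := by
    intro x y
    simp only [B, Matrix.toBilin'_apply]
    rw [Finset.sum_comm, ← Finset.sum_neg_distrib]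
    refine Finset.sum_congr rfl fun i _ => ?_
    rw [← Finset.sum_neg_distrib]
    refine Finset.sum_congr rfl fun j _ => ?_
    rw [hGs j i]
    ring
  let π := Fintype.linearCombination ℤ s
  have hω : ω.compl₁₂ π π = LinearMap.compr₂ B (divHom N) := by
    refine (Pi.basisFun ℤ _).ext fun i => (Pi.basisFun ℤ _).ext fun j => ?_
    simp [π, B, hG]
  obtain ⟨b, hb, hbo⟩ := exists_block_spanning r (V := Fin (2 * r) → ℤ) (by simp) B hB
  refine ⟨fun p => π (b p), fun i => B (b (i, false)) (b (i, true)), ?_, fun p q => ?_⟩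
  · have : Set.range (fun p => π (b p)) = π '' Set.range b := by
      rw [← Set.range_comp]; rfl
    rw [this, ← Submodule.map_span, hb, Submodule.map_top, Fintype.range_linearCombination, hs]
  · have h1 : ω (π (b p)) (π (b q)) = divHom N (B (b p) (b q)) :=
      LinearMap.congr_fun (LinearMap.congr_fun hω (b p)) (b q)
    rw [h1]
    congr 1
    obtain ⟨i, c⟩ := p
    obtain ⟨j, e⟩ := q
    by_cases hij : i = j
    · subst hij
      have h0 : ∀ x, B x x = 0 := fun x => by have := hB x x; omega
      cases c <;> cases e <;> simp [stdForm, h0]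
      exact hB _ _
    · rw [hbo _ _ hij]
      simp [stdForm, hij]


/-- Let `A` be a finite abelian group generated by `2r` elements and let
`ω : A × A → ℚ/ℤ` be a `ℤ`-bilinear, alternating, non-degenerate form.  If `ψ` is an
automorphism of `A` preserving `ω`, then the induced endomorphism of the `2r`-th exterior
power `⋀^{2r}(A)` is the identity. -/
theorem exteriorPower_map_eq_id_of_symplectic {A : Type*} [AddCommGroup A] [Finite A]
    {r : ℕ} (s : Fin (2 * r) → A) (hs : AddSubgroup.closure (Set.range s) = ⊤)
    (ω : A →ₗ[ℤ] A →ₗ[ℤ] AddCircle (1 : ℚ))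
    (halt : ∀ a : A, ω a a = 0)
    (hnd : ∀ a : A, (∀ b : A, ω a b = 0) → a = 0)
    (ψ : A ≃+ A)
    (hψ : ∀ a b : A, ω (ψ a) (ψ b) = ω a b) :
    ∀ x ∈ ⋀[ℤ]^(2 * r) A,
      ExteriorAlgebra.map (ψ.toAddMonoidHom.toIntLinearMap) x = x := by
  classical
  have hs' : Submodule.span ℤ (Set.range s) = ⊤ := by
    rw [← Submodule.toAddSubgroup_inj, Submodule.span_int_eq_addSubgroupClosure, hs]
    rfl
  obtain ⟨N, hN, hNA⟩ : ∃ N : ℕ, N ≠ 0 ∧ ∀ a : A, (N : ℤ) • a = 0 :=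
    ⟨Nat.card A, Nat.card_pos.ne', fun a => by rw [natCast_zsmul, card_nsmul_eq_zero']⟩
  obtain ⟨t, d, ht, htd⟩ := exists_symplectic_generators hN hNA s hs' ω halt
  have hgen : ∀ a : A, ∃ c : Fin r × Bool → ℤ, ∑ p, c p • t p = a := fun a =>
    (Submodule.mem_span_range_iff_exists_fun ℤ).mp (ht ▸ Submodule.mem_top)
  let e : Fin (2 * r) ≃ Fin r × Bool := Fintype.equivOfCardEq (by simp [mul_comm])
  let f : A [⋀^(Fin r × Bool)]→ₗ[ℤ] ExteriorAlgebra ℤ A :=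
    (ExteriorAlgebra.ιMulti ℤ (2 * r)).domDomCongr e
  let h : Fin r → ℤ := fun i => Int.gcd (d i) N
  have hh : ∀ i, h i ≠ 0 := fun i => by
    simp [h, Int.gcd_eq_zero_iff, hN]
  choose c hc using fun i => (Int.gcd_dvd_left (d i) N : (Int.gcd (d i) N : ℤ) ∣ d i)
  choose n' hn' using fun i => (Int.gcd_dvd_right (d i) N : (Int.gcd (d i) N : ℤ) ∣ N)
  have hd : d = fun i => h i * c i := funext hc
  have hcop : ∀ i, IsCoprime (n' i) (c i) := fun i => by
    refine ⟨Int.gcdB (d i) N, Int.gcdA (d i) N, mul_left_cancel₀ (hh i) ?_⟩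
    have := Int.gcd_eq_gcd_ab (d i) N
    have h1 : h i * c i = d i := (hc i).symm
    have h2 : h i * n' i = N := (hn' i).symm
    have h3 : h i = Int.gcd (d i) N := rfl
    rw [← h3] at this
    linear_combination (Int.gcdB (d i) N) * h2 + (Int.gcdA (d i) N) * h1 - this
  have hkill : ∀ i, n' i • t (i, false) = 0 := by
    intro i
    refine hnd _ fun b => ?_
    obtain ⟨β, rfl⟩ := hgen b
    rw [map_sum]
    refine Finset.sum_eq_zero fun q _ => ?_
    rw [map_smul, map_smul, LinearMap.smul_apply, htd, ← map_smul]
    refine smul_eq_zero_of_right _ ((divHom_eq_zero hN).mpr ?_)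
    rw [hn' i]
    unfold stdForm
    split_ifs
    · simp
    · exact ⟨- c i, by simp only [smul_eq_mul]; linear_combination (-(n' i)) * hc i⟩
    · exact ⟨c i, by simp only [smul_eq_mul]; linear_combination n' i * hc i⟩
    · simp
  have hfkill : ∀ i, n' i • f t = 0 := by
    intro i
    have h1 := f.map_update_smul t (i, false) (n' i) (t (i, false))
    rw [Function.update_eq_self, hkill, f.map_update_zero] at h1
    exact h1.symm
  choose M hM using fun q => hgen (ψ (t q))
  let Mm : Matrix (Fin r × Bool) (Fin r × Bool) ℤ := Matrix.of fun p q => M q p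
  have hE : ∀ p q, (N : ℤ) ∣ (Mm.transpose * Matrix.of (stdForm d) * Mm) p q - stdForm d p q := by
    intro p q
    rw [← divHom_eq_zero hN, map_sub, ← htd, ← hψ, ← hM, ← hM, sub_eq_zero]
    simp only [Matrix.mul_apply, map_sum, LinearMap.sum_apply, map_smul, LinearMap.smul_apply, htd,
      Finset.sum_mul, Finset.smul_sum]
    refine Finset.sum_congr rfl fun k _ => Finset.sum_congr rfl fun l _ => ?_
    rw [← map_smul, ← map_smul]
    congr 1
    simp [Mm]
    ring
  choose E hE using hE
  -- For `r = 0` the order is `0`, and the divisibility is an equality.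
  have hdet : (addOrderOf (f t) : ℤ) ∣ Mm.det - 1 := by
    refine dvd_det_sub_one h c n' N _ hh hn' hcop
      (fun i => addOrderOf_dvd_iff_zsmul_eq_zero.mpr (hfkill i)) Mm (Matrix.of E) ?_
    rw [← hd]
    ext p q
    have := hE p q
    simp only [Matrix.add_apply, Matrix.of_apply, Matrix.smul_apply, smul_eq_mul]
    linarith
  have hψf : f (ψ ∘ t) = f t := by
    have h1 := alternatingMap_linearCombination f t Mm
    have h2 : (fun q => ∑ p, Mm p q • t p) = ψ ∘ t := funext hM
    rw [h2] at h1
    have h3 := addOrderOf_dvd_iff_zsmul_eq_zero.mp hdet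
    rwa [sub_smul, one_smul, sub_eq_zero, ← h1] at h3
  intro x hx
  rw [← ExteriorAlgebra.ιMulti_span_fixedDegree] at hx
  induction hx using Submodule.span_induction with
  | zero => simp
  | add x y _ _ hx hy => rw [map_add, hx, hy]
  | smul a x _ hx => rw [map_smul, hx]
  | mem x hx =>
    obtain ⟨v, rfl⟩ := hx
    rw [ExteriorAlgebra.map_apply_ιMulti]
    have hfe : ∀ u : Fin (2 * r) → A, ExteriorAlgebra.ιMulti ℤ (2 * r) u = f (u ∘ e.symm) := by
      intro u
      change _ = ExteriorAlgebra.ιMulti ℤ (2 * r) _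
      congr 1
      ext i
      simp
    rw [hfe, hfe]
    choose C hC using fun q => hgen (v (e.symm q))
    have h1 : v ∘ e.symm = fun q => ∑ p, (Matrix.of fun p q => C q p) p q • t p :=
      funext fun q => (hC q).symm
    have h2 : (⇑ψ.toAddMonoidHom.toIntLinearMap ∘ v) ∘ e.symm =
        fun q => ∑ p, (Matrix.of fun p q => C q p) p q • (ψ ∘ t) p := by
      funext q
      change ψ (v (e.symm q)) = _
      rw [← hC q]
      simp
    rw [h1, h2, alternatingMap_linearCombination, alternatingMap_linearCombination, hψf]
end

section
/- Let A be a finite abelian group that is generated by 2r elements, let ω : A × A → ℚ/ℤ be a symplectic form on A (ℤ-bilinear, alternating, and non-degenerate), and let ψ : A → A be a group automorphism preserving ω. Let A* = Hom(A, ℚ/ℤ) be the dual group and ψ* : A* → A* the dual automorphism given by precomposition with ψ. Then the induced endomorphism ⋀^{2r}(ψ*) of the 2r-th exterior power ⋀^{2r}(A*) is the identity map. -/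
/-!
Since `A` is finite and `ω` is non-degenerate, `a ↦ ω a` is an isomorphism `Ω : A ≃ A*`, which carries
`ψ⁻¹` to `ψ*`. Put `n = 2r`, `tᵢ = Ω sᵢ`, and write `ψ⁻¹ sᵢ = ∑ⱼ Mᵢⱼ sⱼ` with an integer matrix `M`. The
group `⋀ⁿ A*` is generated by `τ = t₁ ∧ ⋯ ∧ tₙ`, and `ψ*` multiplies it by `det M`; so `det M ≡ 1` modulo
the order `d` of `τ` is what has to be shown (`dvd_det_sub_one`).

Lift `ω(sᵢ, sⱼ)` to an alternating rational matrix `W`. Invariance of `ω` says that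
`E = M W Mᵀ - W` is an integer matrix. If `x` is an integer vector with `W x` integral, then
`∑ xⱼ sⱼ = 0` by non-degeneracy, and expanding `t₁ ∧ ⋯ ∧ (∑ xⱼ tⱼ) ∧ ⋯ ∧ tₙ = 0` gives `xᵢ τ = 0`, that
is, `d ∣ xᵢ`. It follows that, for `d ≠ 1`, `W` is invertible and `W⁻¹` has entries in `dR`, where
`R ⊆ ℚ` is the ring of fractions with denominator prime to `d` (`mem_mul_coprimeDen`).

Comparing determinants only yields `(det M)² = det (1 + W⁻¹ E)`; the missing square root is a Pfaffian
in disguise. For alternating `U`, `E` over a field, `det (1 + U E)` is a square because determinants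
of alternating matrices are. Applied to generic matrices, and because `ℤ[uᵢⱼ, eᵢⱼ]` is integrally
closed, this gives a polynomial `Q` with integer coefficients such that `Q(U, E)² = det (1 + U E)`
for alternating `U`, `E` over every commutative ring, and `Q(U, 0) = Q(0, E) = 1`
(`exists_sqrt_det`). Deforming `M` to the identity along a line over `ℚ[X]` fixes the sign:
`Q(W⁻¹, E) = det M` (`evalPair_inv_eq_det`). Finally, as `W⁻¹ ≡ 0` modulo `dR`,
`det M = Q(W⁻¹, E) ≡ Q(0, E) = 1` modulo `dR`, hence modulo `d`.
-/

/-- Precomposition with a group homomorphism `ψ : A →+ A`, as a `ℤ`-linear endomorphism of the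
dual group `A* = Hom(A, ℚ/ℤ)`. -/
def dualCompHom {A : Type*} [AddCommGroup A] (ψ : A →+ A) :
    (A →+ AddCircle (1 : ℚ)) →ₗ[ℤ] (A →+ AddCircle (1 : ℚ)) where
  toFun f := f.comp ψ
  map_add' f g := by ext a; rfl
  map_smul' z f := by ext a; rfl

section

open Matrix

/-! ### Alternating matrices -/

/-- A square matrix is alternating if it is skew-symmetric with zero diagonal (the diagonal condition
matters when `2` is a zero divisor). -/
def IsAltMat {n R : Type*} [Ring R] (U : Matrix n n R) : Prop :=
  (∀ i j, U i j = -U j i) ∧ ∀ i, U i i = 0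

theorem IsAltMat.transpose_eq {n R : Type*} [Ring R] {U : Matrix n n R} (h : IsAltMat U) :
    Uᵀ = -U := by
  ext i j
  simpa using h.1 j i

theorem IsAltMat.map {n R S : Type*} [Ring R] [Ring S] {U : Matrix n n R} (h : IsAltMat U)
    (f : R →+* S) : IsAltMat (U.map f) :=
  ⟨fun i j => by simp [h.1 i j], fun i => by simp [h.2 i]⟩

theorem IsAltMat.submatrix {m n R : Type*} [Ring R] {U : Matrix n n R} (h : IsAltMat U)
    (f : m → n) : IsAltMat (U.submatrix f f) :=
  ⟨fun _ _ => h.1 _ _, fun _ => h.2 _⟩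

theorem IsAltMat.sub {n R : Type*} [Ring R] {U V : Matrix n n R} (hU : IsAltMat U)
    (hV : IsAltMat V) : IsAltMat (U - V) :=
  ⟨fun i j => by simp [hU.1 i j, hV.1 i j]; abel, fun i => by simp [hU.2 i, hV.2 i]⟩

theorem dotProduct_mulVec_self_of_isAltMat {n R : Type*} [Fintype n] [LinearOrder n] [CommRing R]
    {U : Matrix n n R} (h : IsAltMat U) (v : n → R) : v ⬝ᵥ (U *ᵥ v) = 0 := by
  simp only [dotProduct, mulVec, Finset.mul_sum]
  rw [← Finset.sum_product']
  refine Finset.sum_ninvolution Prod.swap ?_ ?_ ?_ ?_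
  · rintro ⟨i, j⟩
    simp only [Prod.swap]
    rw [h.1 i j]; ring
  · rintro ⟨i, j⟩ hne heq
    simp only [Prod.swap, Prod.mk.injEq] at heq
    apply hne
    simp [heq.1, h.2]
  · simp
  · simp

theorem IsAltMat.congr_mul {m n R : Type*} [Fintype n] [LinearOrder n] [CommRing R]
    {U : Matrix n n R} (h : IsAltMat U) (M : Matrix m n R) : IsAltMat (M * U * Mᵀ) := by
  constructor
  · intro i j
    have : (M * U * Mᵀ)ᵀ = -(M * U * Mᵀ) := by
      simp [h.transpose_eq, Matrix.mul_assoc]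
    simpa using congrFun (congrFun this j) i
  · intro i
    have := dotProduct_mulVec_self_of_isAltMat h (M i)
    rw [dotProduct_mulVec] at this
    exact this

/-- Induction on the size: if the first row is nonzero, a symmetric permutation of the indices makes
the upper left `2 × 2` block invertible with square determinant, and its Schur complement is again
alternating. -/
theorem isSquare_det_of_isAltMat_fin {F : Type*} [Field F] :
    ∀ (n : ℕ) (U : Matrix (Fin n) (Fin n) F), IsAltMat U → IsSquare U.det
  | 0, U, _ => by simp
  | 1, U, h => by simp [h.2]
  | n + 2, U, h => by
    by_cases h0 : ∀ j, U 0 j = 0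
    · rw [det_eq_zero_of_row_eq_zero 0 h0]; simp
    push Not at h0
    obtain ⟨j, hj⟩ := h0
    have hj0 : j ≠ 0 := by rintro rfl; exact hj (h.2 0)
    let e : Fin 2 ⊕ Fin n ≃ Fin (n + 2) :=
      (finSumFinEquiv.trans (finCongr (add_comm 2 n))).trans (Equiv.swap 1 j)
    have e0 : e (Sum.inl 0) = 0 := by
      have : (Fin.cast (add_comm 2 n) (Fin.castAdd n (0 : Fin 2))) = 0 := rfl
      simp only [e, Equiv.trans_apply, finSumFinEquiv_apply_left, finCongr_apply, this]
      exact Equiv.swap_apply_of_ne_of_ne (by simp) hj0.symm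
    have e1 : e (Sum.inl 1) = j := by
      have : (Fin.cast (add_comm 2 n) (Fin.castAdd n (1 : Fin 2))) = 1 := rfl
      simp only [e, Equiv.trans_apply, finSumFinEquiv_apply_left, finCongr_apply, this]
      exact Equiv.swap_apply_left _ _
    have hV : IsAltMat (U.submatrix e e) := h.submatrix e
    rw [← det_submatrix_equiv_self e U]
    set V := U.submatrix e e with hVdef
    have hV01 : V (Sum.inl 0) (Sum.inl 1) ≠ 0 := by
      simpa [hVdef, e0, e1] using hj
    rw [← fromBlocks_toBlocks V]
    have hA : V.toBlocks₁₁.det = V (Sum.inl 0) (Sum.inl 1) * V (Sum.inl 0) (Sum.inl 1) := by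
      rw [det_fin_two]
      simp [toBlocks₁₁, hV.2, hV.1 (Sum.inl 1) (Sum.inl 0)]
    have hAalt : IsAltMat V.toBlocks₁₁ := hV.submatrix Sum.inl
    let _ : Invertible V.toBlocks₁₁ := invertibleOfIsUnitDet _
      (by rw [hA]; exact (mul_ne_zero hV01 hV01).isUnit)
    rw [det_fromBlocks₁₁, hA]
    refine IsSquare.mul ⟨_, rfl⟩ (isSquare_det_of_isAltMat_fin n _ ?_)
    refine IsAltMat.sub (hV.submatrix Sum.inr) ?_
    have hinv : IsAltMat (⅟ V.toBlocks₁₁) := by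
      rw [invOf_eq_nonsing_inv, inv_def, adjugate_fin_two]
      constructor
      · intro i k
        fin_cases i <;> fin_cases k <;> simp [hAalt.2, hAalt.1 1 0]
      · intro i
        fin_cases i <;> simp [hAalt.2]
    have hB : V.toBlocks₁₂ = -(V.toBlocks₂₁)ᵀ := by
      ext i k
      exact hV.1 _ _
    rw [hB, Matrix.mul_neg]
    have := hinv.congr_mul V.toBlocks₂₁
    exact ⟨fun i k => by simpa using congrArg Neg.neg (this.1 i k), fun i => by simpa using this.2 i⟩

theorem isSquare_det_of_isAltMat {F n : Type*} [Field F] [Fintype n] [DecidableEq n]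
    {U : Matrix n n F} (h : IsAltMat U) : IsSquare U.det := by
  rw [← det_submatrix_equiv_self (Fintype.equivFin n).symm U]
  exact isSquare_det_of_isAltMat_fin _ _ (h.submatrix _)

/-- `det (1 + U E)` is the product of the determinants of the alternating block matrices
`[[U, 1], [-1, E]]` and `[[0, 1], [-1, 0]]`. -/
theorem isSquare_det_one_add_mul {F n : Type*} [Field F] [Fintype n] [DecidableEq n]
    {U E : Matrix n n F} (hU : IsAltMat U) (hE : IsAltMat E) : IsSquare (1 + U * E).det := by
  have key : ∀ U E : Matrix n n F, IsAltMat U → IsAltMat E →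
      IsAltMat (fromBlocks U 1 (-1) E) := by
    intro U E hU hE
    constructor
    · rintro (i | i) (j | j)
      · exact hU.1 i j
      · simp [one_apply, eq_comm]
      · simp [one_apply, eq_comm]
      · exact hE.1 i j
    · rintro (i | i)
      · exact hU.2 i
      · exact hE.2 i
  have h0 : IsAltMat (0 : Matrix n n F) := ⟨by simp, by simp⟩
  have hprod : fromBlocks U 1 (-1) E * fromBlocks 0 1 (-1) 0 = fromBlocks (-1) U (-E) (-1) := by
    simp [fromBlocks_multiply]
  have hprod' : -fromBlocks (-1) U (-E) (-1) = fromBlocks 1 (-U) E 1 := by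
    simp [fromBlocks_neg]
  have hdet : (fromBlocks (-1) U (-E) (-1) : Matrix (n ⊕ n) (n ⊕ n) F).det = (1 + U * E).det := by
    have : (-fromBlocks (-1) U (-E) (-1) : Matrix (n ⊕ n) (n ⊕ n) F).det
        = (fromBlocks (-1) U (-E) (-1) : Matrix (n ⊕ n) (n ⊕ n) F).det := by
      rw [det_neg]
      simp [← two_mul]
    rw [← this, hprod', det_fromBlocks_one₁₁, det_one_add_mul_comm]
    simp
  rw [← hdet, ← hprod, det_mul]
  exact (isSquare_det_of_isAltMat (key U E hU hE)).mul (isSquare_det_of_isAltMat (key 0 0 h0 h0))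

/-! ### A universal square root of `det (1 + U E)` -/

/-- The alternating matrix whose entries above the diagonal are given by `x`; the values of `x` at
`(i, j)` with `j ≤ i` are ignored. -/
def genAlt {m R : Type*} [LinearOrder m] [Ring R] (x : m × m → R) : Matrix m m R :=
  fun i j => if i < j then x (i, j) else if j < i then -x (j, i) else 0

theorem isAltMat_genAlt {m R : Type*} [LinearOrder m] [Ring R] (x : m × m → R) :
    IsAltMat (genAlt x) := by
  constructor
  · intro i j
    rcases lt_trichotomy i j with h | h | h
    · simp [genAlt, h, h.not_gt]
    · simp [genAlt, h]
    · simp [genAlt, h, h.not_gt]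
  · intro i; simp [genAlt]

theorem genAlt_of_isAltMat {m R : Type*} [LinearOrder m] [Ring R] {U : Matrix m m R}
    (h : IsAltMat U) : genAlt (fun p => U p.1 p.2) = U := by
  ext i j
  rcases lt_trichotomy i j with hij | hij | hij
  · simp [genAlt, hij]
  · simp [genAlt, hij, h.2]
  · simp [genAlt, hij, hij.not_gt, h.1 i j]

theorem map_genAlt {m R S : Type*} [LinearOrder m] [Ring R] [Ring S] (f : R →+* S)
    (x : m × m → R) : (genAlt x).map f = genAlt (f ∘ x) := by
  ext i j
  simp only [genAlt, map_apply, Function.comp]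
  split_ifs <;> simp

/-- The value at the entries of `U` and `E` of a polynomial `Q` whose variables are indexed by the
entries of two `m × m` matrices. -/
noncomputable def evalPair {m R : Type*} [CommRing R]
    (Q : MvPolynomial ((m × m) ⊕ (m × m)) ℤ) (U E : Matrix m m R) : R :=
  MvPolynomial.aeval (Sum.elim (fun p => U p.1 p.2) (fun p => E p.1 p.2)) Q

theorem map_evalPair {m R S : Type*} [CommRing R] [CommRing S] (f : R →+* S)
    (Q : MvPolynomial ((m × m) ⊕ (m × m)) ℤ) (U E : Matrix m m R) :
    f (evalPair Q U E) = evalPair Q (U.map f) (E.map f) := by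
  unfold evalPair
  have := (MvPolynomial.comp_aeval_apply (R := ℤ) (Sum.elim (fun p => U p.1 p.2) (fun p => E p.1 p.2)) f.toIntAlgHom Q)
  rw [RingHom.toIntAlgHom_apply] at this
  rw [this]
  congr 2
  ext (p | p) <;> simp

theorem det_one_add_eq_map {m R S : Type*} [Fintype m] [LinearOrder m] [CommRing R] [CommRing S]
    (f : R →+* S) (U E : Matrix m m R) :
    f (1 + U * E).det = (1 + U.map f * E.map f).det := by
  rw [RingHom.map_det]
  simp [Matrix.map_mul, Matrix.map_add]

/-- A universal square root of `det (1 + U E)` for alternating matrices `U` and `E`, normalised to be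
`1` when `U = 0` or `E = 0`. -/
theorem exists_sqrt_det (m : Type) [Fintype m] [LinearOrder m] :
    ∃ Q : MvPolynomial ((m × m) ⊕ (m × m)) ℤ, ∀ (R : Type) [CommRing R],
      (∀ U E : Matrix m m R, IsAltMat U → IsAltMat E → evalPair Q U E ^ 2 = (1 + U * E).det) ∧
      (∀ U : Matrix m m R, evalPair Q U 0 = 1) ∧ (∀ E : Matrix m m R, evalPair Q 0 E = 1) := by
  let S := MvPolynomial ((m × m) ⊕ (m × m)) ℤ
  let X : Matrix m m S := fun i j => MvPolynomial.X (Sum.inl (i, j))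
  let Y : Matrix m m S := fun i j => MvPolynomial.X (Sum.inr (i, j))
  let U₀ : Matrix m m S := genAlt (fun p => X p.1 p.2)
  let E₀ : Matrix m m S := genAlt (fun p => Y p.1 p.2)
  obtain ⟨Q₀, hQ₀⟩ : ∃ Q : S, Q ^ 2 = (1 + U₀ * E₀).det := by
    let f := algebraMap S (FractionRing S)
    obtain ⟨y, hy⟩ := isSquare_det_one_add_mul ((isAltMat_genAlt (fun p => X p.1 p.2)).map f)
      ((isAltMat_genAlt (fun p => Y p.1 p.2)).map f)
    rw [← det_one_add_eq_map, ← pow_two] at hy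
    obtain ⟨Q, hQ⟩ := IsIntegrallyClosed.exists_algebraMap_eq_of_isIntegral_pow (R := S)
      (K := FractionRing S) (x := y) (n := 2) two_pos (by rw [← hy]; exact isIntegral_algebraMap)
    refine ⟨Q, IsFractionRing.injective S (FractionRing S) ?_⟩
    rw [map_pow, hQ, ← hy]
  -- Specialising the variables transports the identity for `Q` to every commutative ring.
  have hsq : ∀ Q : S, Q ^ 2 = (1 + U₀ * E₀).det → ∀ (R : Type) [CommRing R] (x y : Matrix m m R),
      evalPair Q x y ^ 2 =
        (1 + genAlt (fun p => x p.1 p.2) * genAlt (fun p => y p.1 p.2)).det := by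
    intro Q hQ R _ x y
    let g : S →+* R := (MvPolynomial.aeval (R := ℤ)
      (Sum.elim (fun p => x p.1 p.2) (fun p => y p.1 p.2) : (m × m) ⊕ (m × m) → R)).toRingHom
    have h1 := congrArg g hQ
    rw [det_one_add_eq_map, map_genAlt, map_genAlt, map_pow] at h1
    have hx : (g ∘ fun p => X p.1 p.2) = fun p : m × m => x p.1 p.2 := by
      funext p; exact MvPolynomial.aeval_X _ (Sum.inl p)
    have hy : (g ∘ fun p => Y p.1 p.2) = fun p : m × m => y p.1 p.2 := by
      funext p; exact MvPolynomial.aeval_X _ (Sum.inr p)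
    rw [hx, hy] at h1
    exact h1
  have hz : ∀ (R : Type) [CommRing R], genAlt (fun p : m × m => (0 : Matrix m m R) p.1 p.2) = 0 := by
    intro R _
    exact genAlt_of_isAltMat ⟨by simp, by simp⟩
  obtain ⟨Q, hQ, hQ0⟩ : ∃ Q : S, Q ^ 2 = (1 + U₀ * E₀).det ∧
      evalPair Q (0 : Matrix m m ℤ) 0 = 1 := by
    have h := hsq Q₀ hQ₀ ℤ 0 0
    rw [hz] at h
    rcases sq_eq_sq_iff_eq_or_eq_neg.mp (h.trans (by simp : _ = (1 : ℤ) ^ 2)) with h | h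
    · exact ⟨Q₀, hQ₀, h⟩
    -- The square root is only determined up to sign; it is chosen to be `1` at the origin.
    · refine ⟨-Q₀, by rw [neg_sq, hQ₀], ?_⟩
      simp only [evalPair, map_neg] at h ⊢
      rw [h, neg_neg]
  -- If one matrix is zero, the square is `1`, so the value in the domain `S` is `±1`; setting all
  -- variables to zero excludes `-1`.
  have hpm : ∀ x y : Matrix m m S, (x = 0 ∨ y = 0) → (∀ f : S →+* ℤ, (∀ v, f (MvPolynomial.X v) = 0) →
      x.map f = 0 ∧ y.map f = 0) → evalPair Q x y = 1 := by
    intro x y hxy hf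
    have h := hsq Q hQ S x y
    have h1 : evalPair Q x y ^ 2 = 1 := by
      rcases hxy with rfl | rfl <;> rw [h, hz] <;> simp
    rcases sq_eq_sq_iff_eq_or_eq_neg.mp (h1.trans (one_pow 2).symm) with h | h
    · exact h
    · let f : S →+* ℤ := (MvPolynomial.aeval (R := ℤ) (fun _ => (0 : ℤ))).toRingHom
      obtain ⟨h2, h3⟩ := hf f (fun v => MvPolynomial.aeval_X _ v)
      have h4 := map_evalPair f Q x y
      rw [h2, h3, hQ0, h, map_neg, map_one] at h4
      norm_num at h4
  have hX := hpm X 0 (Or.inr rfl) fun f hf => ⟨by ext i j; exact hf _, by ext; simp⟩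
  have hY := hpm 0 Y (Or.inl rfl) fun f hf => ⟨by ext; simp, by ext i j; exact hf _⟩
  refine ⟨Q, fun R _ => ⟨fun U E hU hE => ?_, fun U => ?_, fun E => ?_⟩⟩
  · rw [hsq Q hQ, genAlt_of_isAltMat hU, genAlt_of_isAltMat hE]
  · let g : S →+* R := (MvPolynomial.aeval (R := ℤ)
      (Sum.elim (fun p => U p.1 p.2) (fun _ => 0) : (m × m) ⊕ (m × m) → R)).toRingHom
    have h := map_evalPair g Q X 0
    have hg : X.map g = U := by
      ext i j
      exact MvPolynomial.aeval_X (R := ℤ) _ (Sum.inl (i, j))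
    rw [hX, map_one, hg, Matrix.map_zero _ (map_zero g)] at h
    exact h.symm
  · let g : S →+* R := (MvPolynomial.aeval (R := ℤ)
      (Sum.elim (fun _ => 0) (fun p => E p.1 p.2) : (m × m) ⊕ (m × m) → R)).toRingHom
    have h := map_evalPair g Q 0 Y
    have hg : Y.map g = E := by
      ext i j
      exact MvPolynomial.aeval_X (R := ℤ) _ (Sum.inr (i, j))
    rw [hY, map_one, hg, Matrix.map_zero _ (map_zero g)] at h
    exact h.symm

/-! ### The determinant modulo `d` -/

theorem isAltMat_inv {n : Type*} [Fintype n] [LinearOrder n] {W : Matrix n n ℚ}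
    (hW : IsAltMat W) : IsAltMat W⁻¹ := by
  have h : (W⁻¹)ᵀ = -W⁻¹ := by
    rw [transpose_nonsing_inv, hW.transpose_eq, ← neg_one_smul ℚ W, ← neg_one_smul ℚ W⁻¹]
    by_cases hu : IsUnit W.det
    · have : Invertible (-1 : ℚ) := invertibleOfNonzero (by norm_num)
      rw [inv_smul _ _ hu]
      norm_num
    · rw [nonsing_inv_apply_not_isUnit W hu, nonsing_inv_apply_not_isUnit]
      · simp
      · rw [det_smul]
        intro h'
        exact hu (isUnit_of_mul_isUnit_right h')
  have h' : ∀ i j, W⁻¹ i j = -W⁻¹ j i := fun i j => congrFun (congrFun h j) i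
  exact ⟨h', fun i => by linarith [h' i i]⟩

open Polynomial in
/-- The sign in `evalPair Q W⁻¹ (M W Mᵀ - W) = ± det M` is determined by deforming `M` to the identity
matrix along the line `1 + X (M - 1)` over `ℚ[X]`. -/
theorem evalPair_inv_eq_det {m : Type} [Fintype m] [LinearOrder m]
    {Q : MvPolynomial ((m × m) ⊕ (m × m)) ℤ}
    (hQ : ∀ (R : Type) [CommRing R],
      (∀ U E : Matrix m m R, IsAltMat U → IsAltMat E → evalPair Q U E ^ 2 = (1 + U * E).det) ∧
      (∀ U : Matrix m m R, evalPair Q U 0 = 1) ∧ (∀ E : Matrix m m R, evalPair Q 0 E = 1))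
    {W : Matrix m m ℚ} (hW : IsAltMat W) (hdet : IsUnit W.det) (M : Matrix m m ℚ) :
    evalPair Q W⁻¹ (M * W * Mᵀ - W) = M.det := by
  let c : ℚ →+* ℚ[X] := C
  let N : Matrix m m ℚ[X] := 1 + (X : ℚ[X]) • (M - 1).map c
  let V := W.map c
  let U := W⁻¹.map c
  have hV : IsAltMat V := hW.map c
  have hU : IsAltMat U := (isAltMat_inv hW).map c
  have hUV : U * V = 1 := by
    rw [← Matrix.map_mul, nonsing_inv_mul _ hdet]
    simp
  have hE : IsAltMat (N * V * Nᵀ - V) := (hV.congr_mul N).sub hV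
  have h1 := (hQ ℚ[X]).1 U _ hU hE
  have h2 : 1 + U * (N * V * Nᵀ - V) = U * (N * V * Nᵀ) := by
    rw [mul_sub, hUV]; abel
  have h3 : U.det * V.det = 1 := by rw [← det_mul, hUV, det_one]
  have h4 : (U * (N * V * Nᵀ)).det = N.det ^ 2 := by
    simp only [det_mul, det_transpose]
    linear_combination N.det ^ 2 * h3
  rw [h2, h4] at h1
  have hN : ∀ t : ℚ, N.map (evalRingHom t) = 1 + t • (M - 1) := by
    intro t
    ext i j
    have h1 : eval t ((1 : Matrix m m ℚ[X]) i j) = (1 : Matrix m m ℚ) i j := by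
      by_cases hij : i = j <;> simp [hij, one_apply]
    change eval t ((1 : Matrix m m ℚ[X]) i j + X * C ((M - 1) i j)) =
      (1 : Matrix m m ℚ) i j + t * (M - 1) i j
    rw [eval_add, eval_mul, eval_X, eval_C, h1]
  have hVt : ∀ t : ℚ, V.map (evalRingHom t) = W := by
    intro t; ext i j; simp [V, c]
  have hUt : ∀ t : ℚ, U.map (evalRingHom t) = W⁻¹ := by
    intro t; ext i j; simp [U, c]
  have hP : ∀ t : ℚ, (evalRingHom t) (evalPair Q U (N * V * Nᵀ - V)) =
      evalPair Q W⁻¹ ((1 + t • (M - 1)) * W * (1 + t • (M - 1))ᵀ - W) := by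
    intro t
    rw [map_evalPair, hUt]
    congr 1
    rw [Matrix.map_sub _ (map_sub _), Matrix.map_mul, Matrix.map_mul, transpose_map, hN, hVt]
  have hD : ∀ t : ℚ, (evalRingHom t) N.det = (1 + t • (M - 1)).det := by
    intro t
    rw [RingHom.map_det, RingHom.mapMatrix_apply, hN]
  -- In the domain `ℚ[X]` both sides agree up to sign; at `X = 0` both are equal to `1`.
  have h5 : evalPair Q U (N * V * Nᵀ - V) = N.det := by
    rcases sq_eq_sq_iff_eq_or_eq_neg.mp h1 with h | h
    · exact h
    · have h6 := congrArg (evalRingHom (0 : ℚ)) h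
      rw [hP, map_neg, hD] at h6
      simp only [zero_smul, add_zero, one_mul, transpose_one, mul_one, sub_self, det_one,
        (hQ ℚ).2.1] at h6
      norm_num at h6
  have h7 := congrArg (evalRingHom (1 : ℚ)) h5
  rw [hP, hD] at h7
  simpa using h7

/-- The subring of `ℚ` of all fractions whose denominator is prime to `d`. For `d = 0` this is `ℤ`. -/
def coprimeDen (d : ℕ) : Subring ℚ where
  carrier := {q | q.den.Coprime d}
  mul_mem' {a b} ha hb := (Nat.Coprime.mul_left ha hb).coprime_dvd_left (Rat.mul_den_dvd a b)
  add_mem' {a b} ha hb := (Nat.Coprime.mul_left ha hb).coprime_dvd_left (Rat.add_den_dvd a b)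
  one_mem' := by simp
  zero_mem' := by simp
  neg_mem' {a} ha := by simpa using ha

theorem dvd_of_eq_mul_coprimeDen {d : ℕ} {z : ℤ} {q : ℚ} (hq : q ∈ coprimeDen d)
    (h : (z : ℚ) = d * q) : (d : ℤ) ∣ z := by
  have hq' : q.den.Coprime d := hq
  have h1 : z * (q.den : ℤ) = d * q.num := by
    have : (z : ℚ) * q.den = d * q.num := by rw [h, mul_assoc, Rat.mul_den_eq_num]
    exact_mod_cast this
  exact (Int.isCoprime_iff_gcd_eq_one.mpr (by simpa [Int.gcd] using hq'.symm)).dvd_of_dvd_mul_right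
    (Dvd.intro _ h1.symm)

/-- If `U ≡ 0` modulo `d` and `E` is integral over `R = coprimeDen d`, then `Q(U, E) ≡ Q(0, E) = 1`
modulo `dR`, by reduction to the quotient `R / dR`. -/
theorem exists_evalPair_eq {m : Type} [Fintype m] [LinearOrder m]
    {Q : MvPolynomial ((m × m) ⊕ (m × m)) ℤ}
    (hQ : ∀ (R : Type) [CommRing R] (E : Matrix m m R), evalPair Q 0 E = 1)
    {d : ℕ} {U E : Matrix m m ℚ} (hU : ∀ i j, ∃ q ∈ coprimeDen d, U i j = d * q)
    (hE : ∀ i j, E i j ∈ coprimeDen d) :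
    ∃ q ∈ coprimeDen d, evalPair Q U E = 1 + d * q := by
  choose u hu hUu using hU
  let R := coprimeDen d
  let U' : Matrix m m R := fun i j => (d : R) * ⟨u i j, hu i j⟩
  let E' : Matrix m m R := fun i j => ⟨E i j, hE i j⟩
  let I : Ideal R := Ideal.span {(d : R)}
  have h0 : U'.map (Ideal.Quotient.mk I) = 0 := by
    ext i j
    exact Ideal.Quotient.eq_zero_iff_mem.mpr
      (Ideal.mul_mem_right _ _ (Ideal.mem_span_singleton_self _))
  have h1 : Ideal.Quotient.mk I (evalPair Q U' E') = Ideal.Quotient.mk I 1 := by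
    rw [map_evalPair, h0, hQ, map_one]
  obtain ⟨q, hq⟩ := Ideal.mem_span_singleton.mp (Ideal.Quotient.eq.mp h1)
  refine ⟨q, q.2, ?_⟩
  have h2 := map_evalPair R.subtype Q U' E'
  have hU' : U'.map R.subtype = U := by
    ext i j; rw [hUu]; rfl
  have hE' : E'.map R.subtype = E := by
    ext i j; rfl
  rw [hU', hE'] at h2
  rw [← h2, sub_eq_iff_eq_add'.mp hq]
  simp

/-- If every integer vector that `W` maps to an integer vector is divisible by `d`, then every rational
vector `x` that `W` maps to an integer vector has coordinates in `d • coprimeDen d`: the least common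
denominator `N` of the coordinates of `x` is prime to `d`. -/
theorem mem_mul_coprimeDen {m : Type} [Fintype m] {d : ℕ} {W : Matrix m m ℚ}
    (hW : ∀ x : m → ℤ, (∀ i, ∃ z : ℤ, (W *ᵥ (fun j => (x j : ℚ))) i = z) → ∀ i, (d : ℤ) ∣ x i)
    (x : m → ℚ) (hx : ∀ i, ∃ z : ℤ, (W *ᵥ x) i = z) (i : m) :
    ∃ q ∈ coprimeDen d, x i = d * q := by
  classical
  have hex : ∃ N : ℕ, 0 < N ∧ ∀ i, ∃ z : ℤ, (N : ℚ) * x i = z := by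
    refine ⟨∏ i, (x i).den, Finset.prod_pos fun i _ => (x i).den_pos, fun i => ?_⟩
    obtain ⟨k, hk⟩ := Finset.dvd_prod_of_mem (fun i => (x i).den) (Finset.mem_univ i)
    refine ⟨k * (x i).num, ?_⟩
    rw [hk]
    push_cast
    rw [mul_comm ((x i).den : ℚ), mul_assoc, Rat.den_mul_eq_num]
  obtain ⟨hN0, hN⟩ := Nat.find_spec hex
  have hmin := fun n => Nat.find_min' hex (m := n)
  set N := Nat.find hex
  choose y hy using hN
  have hdy : ∀ i, (d : ℤ) ∣ y i := by
    apply hW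
    intro i
    obtain ⟨z, hz⟩ := hx i
    refine ⟨N * z, ?_⟩
    have : (fun j => (y j : ℚ)) = (N : ℚ) • x := by ext j; simp [hy]
    rw [this, mulVec_smul, Pi.smul_apply, hz]
    simp
  -- Otherwise `N / gcd(N, d)` would be a smaller common denominator, as `N x` is divisible by `d`.
  have hcop : N.Coprime d := by
    obtain ⟨a, ha⟩ := Nat.gcd_dvd_left N d
    obtain ⟨b, hb⟩ := Nat.gcd_dvd_right N d
    have hg : 0 < N.gcd d := Nat.gcd_pos_of_pos_left _ hN0
    have ha0 : 0 < a := Nat.pos_of_ne_zero (by rintro rfl; simp at ha; omega)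
    have hle : N ≤ a := by
      refine hmin a ⟨ha0, fun i => ?_⟩
      obtain ⟨k, hk⟩ := hdy i
      refine ⟨b * k, ?_⟩
      have h1 : (N : ℚ) * x i = d * k := by rw [hy, hk]; push_cast; rfl
      have h2 : (N : ℚ) = (N.gcd d : ℚ) * a := by exact_mod_cast ha
      have h3 : (d : ℚ) = (N.gcd d : ℚ) * b := by exact_mod_cast hb
      rw [h3, h2] at h1
      have hg' : ((N.gcd d : ℕ) : ℚ) ≠ 0 := by exact_mod_cast hg.ne'
      apply mul_left_cancel₀ hg'
      push_cast
      linear_combination h1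
    by_contra hne
    have : 2 ≤ N.gcd d := by
      have : N.gcd d ≠ 1 := hne
      omega
    nlinarith
  obtain ⟨k, hk⟩ := hdy i
  have hN' : (N : ℚ) ≠ 0 := by exact_mod_cast hN0.ne'
  refine ⟨(k : ℚ) / N, ?_, ?_⟩
  · have : ((k : ℚ) / (N : ℚ)).den ∣ N := by
      have := Rat.den_dvd k N
      exact_mod_cast this
    exact Nat.Coprime.coprime_dvd_left this hcop
  · field_simp
    rw [mul_comm, hy, hk]; push_cast; ring

/-- The arithmetic core: an integer matrix preserving the alternating form `W` modulo integers has
determinant `1` modulo `d`, if `d` divides every integer vector that `W` maps to an integer vector. -/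
theorem dvd_det_sub_one_s3 {m : Type} [Fintype m] [LinearOrder m] {d : ℕ}
    {W : Matrix m m ℚ} (hWalt : IsAltMat W)
    (hW : ∀ x : m → ℤ, (∀ i, ∃ z : ℤ, (W *ᵥ (fun j => (x j : ℚ))) i = z) → ∀ i, (d : ℤ) ∣ x i)
    (M : Matrix m m ℤ)
    (hM : ∀ i j, ∃ z : ℤ, (M.map (Int.cast : ℤ → ℚ) * W * (M.map (Int.cast : ℤ → ℚ))ᵀ - W) i j = z) :
    (d : ℤ) ∣ M.det - 1 := by
  classical
  by_cases hd1 : d = 1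
  · simp [hd1]
  have hdet : IsUnit W.det := by
    rw [isUnit_iff_ne_zero]
    intro h0
    obtain ⟨v, hv, hWv⟩ := exists_mulVec_eq_zero_iff.mpr h0
    obtain ⟨i, hi⟩ := Function.ne_iff.mp hv
    -- A rational multiple of the kernel vector `v` has a coordinate equal to `1`.
    obtain ⟨q, hq, hqe⟩ := mem_mul_coprimeDen hW ((v i)⁻¹ • v)
      (fun j => ⟨0, by rw [mulVec_smul, hWv]; simp⟩) i
    have h1 : ((1 : ℤ) : ℚ) = d * q := by
      rw [← hqe]; simp [inv_mul_cancel₀ hi]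
    have := dvd_of_eq_mul_coprimeDen hq h1
    rw [← Nat.cast_one, Int.natCast_dvd_natCast, Nat.dvd_one] at this
    exact hd1 this
  obtain ⟨Q, hQ⟩ := exists_sqrt_det m
  have hU : ∀ i j, ∃ q ∈ coprimeDen d, W⁻¹ i j = d * q := by
    intro i j
    refine mem_mul_coprimeDen hW (fun i => W⁻¹ i j) (fun k => ⟨if k = j then 1 else 0, ?_⟩) i
    have : (W * W⁻¹) k j = (1 : Matrix m m ℚ) k j := by rw [mul_nonsing_inv _ hdet]
    rw [one_apply] at this
    push_cast
    exact this
  have hE : ∀ i j, (M.map (Int.cast : ℤ → ℚ) * W * (M.map (Int.cast : ℤ → ℚ))ᵀ - W) i j ∈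
      coprimeDen d := fun i j => by
    obtain ⟨z, hz⟩ := hM i j
    rw [hz]
    exact intCast_mem _ z
  obtain ⟨q, hq, hqe⟩ := exists_evalPair_eq (fun R _ => (hQ R).2.2) hU hE
  rw [evalPair_inv_eq_det hQ hWalt hdet] at hqe
  refine dvd_of_eq_mul_coprimeDen hq ?_
  have : ((M.det : ℤ) : ℚ) = (M.map (Int.cast : ℤ → ℚ)).det := Int.cast_det M
  rw [Int.cast_sub, this, hqe, Int.cast_one]
  ring

/-! ### Alternating maps, the dual group and lifts of the form -/

theorem alternatingMap_sum_smul {n : ℕ} {B P : Type*} [AddCommGroup B] [AddCommGroup P]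
    (F : B [⋀^Fin n]→ₗ[ℤ] P) (t : Fin n → B) (c : Matrix (Fin n) (Fin n) ℤ) :
    F (fun i => ∑ j, c i j • t j) = c.det • F t := by
  let G : (Fin n → ℤ) [⋀^Fin n]→ₗ[ℤ] P := F.compLinearMap (Fintype.linearCombination ℤ t)
  let D : (Fin n → ℤ) [⋀^Fin n]→ₗ[ℤ] P :=
    (LinearMap.toSpanSingleton ℤ P (F t)).compAlternatingMap detRowAlternating
  have h : G = D := by
    refine (Pi.basisFun ℤ (Fin n)).ext_alternating fun v hv => ?_
    let σ : Equiv.Perm (Fin n) := Equiv.ofBijective v (Finite.injective_iff_bijective.1 hv)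
    have h1 : (fun i => Pi.basisFun ℤ (Fin n) (v i)) = Pi.basisFun ℤ (Fin n) ∘ σ := rfl
    rw [h1, G.map_perm, D.map_perm]
    congr 1
    have h2 : D (Pi.basisFun ℤ (Fin n)) = (1 : Matrix (Fin n) (Fin n) ℤ).det • F t := by
      change (det fun i => Pi.basisFun ℤ (Fin n) i) • F t = _
      congr 2
      ext i j
      simp [one_apply, Pi.single_apply, eq_comm]
    rw [h2, det_one, one_smul]
    change F (fun i => Fintype.linearCombination ℤ t (Pi.basisFun ℤ (Fin n) i)) = _
    congr 1
    ext i
    simp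
  exact congrArg (fun f : (Fin n → ℤ) [⋀^Fin n]→ₗ[ℤ] P => f c) h

/-- Replacing `t i` by the vanishing combination `∑ j, x j • t j` multiplies `F t` by `x i`. -/
theorem smul_eq_zero_of_relation {n : ℕ} {B P : Type*} [AddCommGroup B] [AddCommGroup P]
    (F : B [⋀^Fin n]→ₗ[ℤ] P) (t : Fin n → B) (x : Fin n → ℤ) (hx : ∑ j, x j • t j = 0)
    (i : Fin n) : x i • F t = 0 := by
  have h : F (Function.update t i (∑ j, x j • t j)) = x i • F t := by
    rw [F.map_update_sum, Finset.sum_eq_single i]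
    · rw [F.map_update_smul, Function.update_eq_self]
    · intro j _ hj
      rw [F.map_update_smul, F.map_update_self _ hj.symm, smul_zero]
    · simp
  rw [← h, hx]
  exact F.map_coord_zero i (by simp)

/-- The dual embeds into the group of complex characters, through `ℚ/ℤ → ℝ/ℤ → ℂ`; the latter are
linearly independent functions on `A`. -/
theorem card_dual_le (A : Type*) [AddCommGroup A] [Finite A] :
    Finite (A →+ AddCircle (1 : ℚ)) ∧ Nat.card (A →+ AddCircle (1 : ℚ)) ≤ Nat.card A := by
  have := Fintype.ofFinite A
  let φ : AddCircle (1 : ℚ) →+ AddCircle (1 : ℝ) :=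
    QuotientAddGroup.map _ _ (Rat.castHom ℝ).toAddMonoidHom (by
      rw [AddSubgroup.zmultiples_le]
      exact ⟨1, by simp⟩)
  have hφ : Function.Injective φ := by
    rw [injective_iff_map_eq_zero]
    intro a
    induction a using QuotientAddGroup.induction_on with
    | H q =>
      intro h
      change ((q : ℝ) : AddCircle (1 : ℝ)) = 0 at h
      obtain ⟨n, hn⟩ := (AddCircle.coe_eq_zero_iff _).mp h
      refine (AddCircle.coe_eq_zero_iff _).mpr ⟨n, ?_⟩
      simp only [zsmul_eq_mul, mul_one] at hn ⊢
      exact_mod_cast hn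
  let Φ : (A →+ AddCircle (1 : ℚ)) → AddChar A ℂ := fun f =>
    Circle.coeHom.compAddChar (AddCircle.toCircle_addChar.compAddMonoidHom (φ.comp f))
  have hΦ : Function.Injective Φ := by
    intro f g h
    ext a
    have h1 := DFunLike.congr_fun h a
    exact hφ (AddCircle.injective_toCircle one_ne_zero (Circle.coe_injective h1))
  have : Finite (A →+ AddCircle (1 : ℚ)) := Finite.of_injective Φ hΦ
  refine ⟨this, (Nat.card_le_card_of_injective Φ hΦ).trans ?_⟩
  rw [Nat.card_eq_fintype_card, Nat.card_eq_fintype_card]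
  exact AddChar.card_addChar_le A ℂ

theorem coe_eq_zero_iff_exists_int (q : ℚ) : (q : AddCircle (1 : ℚ)) = 0 ↔ ∃ z : ℤ, q = z := by
  rw [AddCircle.coe_eq_zero_iff]
  simp [eq_comm]

theorem exists_isAltMat_lift {A : Type*} [AddCommGroup A] {n : ℕ} (s : Fin n → A)
    (ω : A →ₗ[ℤ] A →ₗ[ℤ] AddCircle (1 : ℚ)) (halt : ω.IsAlt) :
    ∃ W : Matrix (Fin n) (Fin n) ℚ, IsAltMat W ∧
      ∀ i j, (W i j : AddCircle (1 : ℚ)) = ω (s i) (s j) := by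
  have h : ∀ p : Fin n × Fin n, ∃ q : ℚ, (q : AddCircle (1 : ℚ)) = ω (s p.1) (s p.2) :=
    fun p => QuotientAddGroup.mk_surjective _
  choose w hw using h
  refine ⟨genAlt w, isAltMat_genAlt w, fun i j => ?_⟩
  rcases lt_trichotomy i j with hij | rfl | hij
  · simp [genAlt, hij, hw]
  · simp [genAlt, halt.self_eq_zero]
  · simp only [genAlt, hij, hij.not_gt, if_true, if_false]
    rw [AddCircle.coe_neg, hw, halt.neg]

/-- If `W` lifts the values of `ω` on the family `s`, the rational bilinear form of `W` lifts `ω` on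
integral combinations of `s`. -/
theorem coe_sum_lift {A : Type*} [AddCommGroup A] {n : ℕ} {s : Fin n → A}
    {ω : A →ₗ[ℤ] A →ₗ[ℤ] AddCircle (1 : ℚ)} {W : Matrix (Fin n) (Fin n) ℚ}
    (hW : ∀ i j, (W i j : AddCircle (1 : ℚ)) = ω (s i) (s j)) (x y : Fin n → ℤ) :
    ((∑ i, ∑ j, x i * W i j * y j : ℚ) : AddCircle (1 : ℚ)) =
      ω (∑ i, x i • s i) (∑ j, y j • s j) := by
  let π : ℚ →+ AddCircle (1 : ℚ) := QuotientAddGroup.mk' _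
  change π _ = _
  simp only [map_sum, map_smul, LinearMap.sum_apply, LinearMap.smul_apply, ← hW, Finset.smul_sum]
  rw [Finset.sum_comm]
  refine Finset.sum_congr rfl fun j _ => Finset.sum_congr rfl fun i _ => ?_
  have : (x i * W i j * y j : ℚ) = y j • x i • W i j := by
    simp only [zsmul_eq_mul]; ring
  rw [this, map_zsmul, map_zsmul]
  rfl

end

/-! ### The exterior power of the dual group -/

/-- Let `A` be a finite abelian group generated by `2r` elements, `ω` a symplectic
(`ℤ`-bilinear, alternating, non-degenerate) form on `A` with values in `ℚ/ℤ`, and `ψ` an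
automorphism of `A` preserving `ω`.  Then the endomorphism of `⋀^{2r}(A*)` induced by the dual
automorphism `ψ* : A* → A*` (precomposition with `ψ`) is the identity. -/
theorem exteriorPower_dualMap_eq_id_of_symplectic {A : Type*} [AddCommGroup A] [Finite A]
    {r : ℕ} (s : Fin (2 * r) → A) (hs : AddSubgroup.closure (Set.range s) = ⊤)
    (ω : A →ₗ[ℤ] A →ₗ[ℤ] AddCircle (1 : ℚ))
    (halt : ∀ a : A, ω a a = 0)
    (hnd : ∀ a : A, (∀ b : A, ω a b = 0) → a = 0)
    (ψ : A ≃+ A)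
    (hψ : ∀ a b : A, ω (ψ a) (ψ b) = ω a b) :
    ∀ x ∈ ⋀[ℤ]^(2 * r) (A →+ AddCircle (1 : ℚ)),
      ExteriorAlgebra.map (dualCompHom ψ.toAddMonoidHom) x = x := by
  have hgen : ∀ a : A, ∃ c : Fin (2 * r) → ℤ, ∑ j, c j • s j = a := fun a => by
    have ha : a ∈ AddSubgroup.closure (Set.range s) := hs ▸ AddSubgroup.mem_top a
    obtain ⟨c, hc⟩ := AddSubgroup.mem_closure_range_iff_of_fintype.mp ha
    exact ⟨c, hc.symm⟩
  have halt' : ω.IsAlt := halt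
  let Ω : A →+ (A →+ AddCircle (1 : ℚ)) :=
    AddMonoidHom.mk' (fun a => (ω a).toAddMonoidHom) (fun a b => by ext; simp)
  have hΩinj : Function.Injective Ω := by
    rw [injective_iff_map_eq_zero]
    exact fun a ha => hnd a fun b => DFunLike.congr_fun ha b
  have hΩ : Function.Surjective Ω := by
    obtain ⟨hfin, hcard⟩ := card_dual_le A
    exact (hΩinj.bijective_of_nat_card_le hcard).2
  let t : Fin (2 * r) → (A →+ AddCircle (1 : ℚ)) := fun i => Ω (s i)
  choose M hM using fun i => hgen (ψ.symm (s i))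
  let φ := dualCompHom ψ.toAddMonoidHom
  have hφΩ : ∀ a, φ (Ω a) = Ω (ψ.symm a) := by
    intro a
    ext b
    change ω a (ψ b) = ω (ψ.symm a) b
    rw [← hψ (ψ.symm a), ψ.apply_symm_apply]
  have hφt : ∀ i, φ (t i) = ∑ j, M i j • t j := by
    intro i
    rw [hφΩ, ← hM]
    simp [t]
  obtain ⟨W, hWalt, hW⟩ := exists_isAltMat_lift s ω halt'
  let F := ExteriorAlgebra.ιMulti ℤ (M := (A →+ AddCircle (1 : ℚ))) (2 * r)
  have hdet : ((addOrderOf (F t) : ℕ) : ℤ) ∣ Matrix.det M - 1 := by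
    refine dvd_det_sub_one_s3 hWalt ?_ M ?_
    · intro x hx i
      have hx0 : ∑ j, x j • s j = 0 := by
        refine hnd _ fun b => ?_
        obtain ⟨c, rfl⟩ := hgen b
        choose z hz using hx
        rw [← halt'.neg, neg_eq_zero, ← coe_sum_lift hW, coe_eq_zero_iff_exists_int]
        refine ⟨∑ k, c k * z k, ?_⟩
        push_cast
        refine Finset.sum_congr rfl fun k _ => ?_
        rw [← hz k, Matrix.mulVec, dotProduct, Finset.mul_sum]
        exact Finset.sum_congr rfl fun j _ => mul_assoc _ _ _
      rw [addOrderOf_dvd_iff_zsmul_eq_zero]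
      refine smul_eq_zero_of_relation F t x ?_ i
      have h3 := congrArg Ω hx0
      simpa [t] using h3
    · intro i j
      rw [← coe_eq_zero_iff_exists_int, Matrix.sub_apply, AddCircle.coe_sub, sub_eq_zero, hW]
      have h1 : ω (s i) (s j) = ω (∑ k, M i k • s k) (∑ l, M j l • s l) := by
        rw [hM, hM, ← hψ (ψ.symm (s i)), ψ.apply_symm_apply, ψ.apply_symm_apply]
      rw [h1, ← coe_sum_lift hW]
      congr 1
      simp only [Matrix.mul_apply, Matrix.transpose_apply, Finset.sum_mul]
      exact Finset.sum_comm
  have hFt : Matrix.det M • F t = F t := by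
    have h := addOrderOf_dvd_iff_zsmul_eq_zero.mp hdet
    rwa [sub_smul, one_smul, sub_eq_zero] at h
  have hmap : ∀ f : Fin (2 * r) → (A →+ AddCircle (1 : ℚ)),
      ExteriorAlgebra.map φ (F f) = F f := by
    intro f
    have hf : ∀ i, ∃ c : Fin (2 * r) → ℤ, f i = ∑ j, c j • t j := by
      intro i
      obtain ⟨a, ha⟩ := hΩ (f i)
      obtain ⟨c, rfl⟩ := hgen a
      exact ⟨c, by rw [← ha]; simp [t]⟩
    choose c hc using hf
    have hφt' : ExteriorAlgebra.map φ (F t) = F t := by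
      rw [ExteriorAlgebra.map_apply_ιMulti]
      have : (φ ∘ t) = fun i => ∑ j, M i j • t j := funext hφt
      rw [this, alternatingMap_sum_smul F t M, hFt]
    have hfF : F f = Matrix.det c • F t := by
      rw [← alternatingMap_sum_smul F t c]
      congr 1
      exact funext hc
    rw [hfF, map_zsmul, hφt']
  intro x hx
  rw [← ExteriorAlgebra.ιMulti_span_fixedDegree] at hx
  induction hx using Submodule.span_induction with
  | mem x hx =>
    obtain ⟨f, rfl⟩ := hx
    exact hmap f
  | zero => exact map_zero _
  | add x y _ _ hx hy => rw [map_add, hx, hy]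
  | smul z x _ hx => rw [map_zsmul, hx]
end

section
/- Let r ≥ 1 and let n₁, …, n_r be positive integers with nᵢ dividing nᵢ₊₁ for i = 1, …, r−1. Let J be the 2r × 2r rational matrix which is block-diagonal with 2×2 diagonal blocks [[0, 1/nᵢ], [−1/nᵢ, 0]] for i = 1, …, r. Let C be a 2r × 2r integer matrix such that every entry of the matrix C·J·Cᵗ − J (computed over ℚ, with Cᵗ the transpose of C) is an integer. Then det(C) ≡ 1 (mod n₁). -/
/-!
The congruence `C J Cᵗ = J + Z` is turned into a congruence of Pfaffians. With
`D = diag(n₁, 1, n₂, 1, …)`, the matrix `D J D` is the standard symplectic matrix `J₀`, and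
`M = D (C J Cᵗ) D = J₀ + D Z D` is an integral skew matrix. From `Pf (B A Bᵗ) = det B · Pf A`,
applied to `D C` and to `D`, one gets `Pf M = det C · Pf J₀ = det C`. Every entry of `D Z D` with an
index of the first kind (a row or column scaled by `nᵢ`) is divisible by `n₁`. So modulo `n₁` the
matrix `M` differs from `J₀` only where both indices are of the second kind. A perfect matching
that joins two indices of the second kind also joins two of the first kind, where `M ≡ 0`; hence
`Pf M ≡ Pf J₀ = 1`.

The Pfaffian comes in two forms. The sum `pfSum` over all permutations is multilinear and
alternating in the rows of `B`, which gives the transformation rule (`pfSum_congr`). The signed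
products are constant on the left cosets of the hyperoctahedral group (`pfTerm_mul`), so `pfSum` is
the order of that group times the sum `pf` over coset representatives (`pfSum_eq`). The form `pf`
has no denominators and can be reduced modulo `n₁` term by term (`pfTerm_modEq`).
-/

open Matrix

/-- The standard symplectic-type matrix `J`: block-diagonal with `2 × 2` blocks
`[[0, 1/nᵢ], [−1/nᵢ, 0]]` (for `i = 0, …, r-1` in 0-indexed form), as a `2r × 2r` rational
matrix. -/
noncomputable def stdSymplJ (r : ℕ) (n : ℕ → ℕ) : Matrix (Fin (2 * r)) (Fin (2 * r)) ℚ :=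
  Matrix.of fun i j =>
    if i.val % 2 = 0 ∧ j.val = i.val + 1 then ((n (i.val / 2) : ℚ))⁻¹
    else if j.val % 2 = 0 ∧ i.val = j.val + 1 then -((n (j.val / 2) : ℚ))⁻¹
    else 0

namespace PfaffianSum

section
variable {ι : Type*} {R : Type*} [CommRing R]

/-! ### Pairings and the standard symplectic matrix -/

/-- The involution of `ι × Bool` that exchanges the two elements of every pair. -/
def pairSwap (ι : Type*) : Equiv.Perm (ι × Bool) :=
  (Equiv.refl ι).prodCongr Equiv.boolNot

/-- The hyperoctahedral group: the permutations of `ι × Bool` that respect the partition into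
pairs, encoded as the centralizer of `pairSwap`. -/
def pairGroup (ι : Type*) : Subgroup (Equiv.Perm (ι × Bool)) :=
  Subgroup.centralizer {pairSwap ι}

@[simp] lemma pairSwap_apply (i : ι) (b : Bool) : pairSwap ι (i, b) = (i, !b) := rfl

lemma mem_pairGroup {h : Equiv.Perm (ι × Bool)} :
    h ∈ pairGroup ι ↔ ∀ i, h (i, true) = pairSwap ι (h (i, false)) := by
  rw [pairGroup, Subgroup.mem_centralizer_singleton_iff]
  constructor
  · intro H i
    simpa using congrArg (fun f => f (i, false)) H
  · intro H
    ext1 ⟨i, b⟩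
    have hi := H i
    rcases hx : h (i, false) with ⟨j, c⟩
    rw [hx] at hi
    cases b <;> simp [hi, hx]

/-- The standard symplectic matrix on `ι × Bool`. -/
def stdJ (ι : Type*) [DecidableEq ι] (R : Type*) [CommRing R] : Matrix (ι × Bool) (ι × Bool) R :=
  Matrix.of fun x y => if y = pairSwap ι x then (if x.2 then -1 else 1) else 0

lemma stdJ_skew [DecidableEq ι] (x y : ι × Bool) : stdJ ι R x y = -stdJ ι R y x := by
  obtain ⟨i, b⟩ := x
  obtain ⟨j, c⟩ := y
  by_cases h : i = j
  · subst h
    cases b <;> cases c <;> simp [stdJ]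
  · simp [stdJ, h, Ne.symm h]

variable [Fintype ι] [DecidableEq ι]

/-! ### Pfaffian sums -/

/-- The summand of the Pfaffian of `A` attached to the permutation `σ`. -/
def pfTerm (A : Matrix (ι × Bool) (ι × Bool) R) (σ : Equiv.Perm (ι × Bool)) : R :=
  ((Equiv.Perm.sign σ : ℤ) : R) * ∏ i, A (σ (i, false)) (σ (i, true))

/-- The sum of the Pfaffian summands over all permutations; on skew matrices this is the
Pfaffian multiplied by the order of `pairGroup`. -/
def pfSum (A : Matrix (ι × Bool) (ι × Bool) R) : R := ∑ σ, pfTerm A σ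

open Classical in
/-- The Pfaffian as a sum over chosen representatives of the left cosets of `pairGroup`.
The value is independent of the representatives when `A` is skew. -/
noncomputable def pf (A : Matrix (ι × Bool) (ι × Bool) R) : R :=
  ∑ q : Equiv.Perm (ι × Bool) ⧸ pairGroup ι, pfTerm A q.out

/-- An element of `pairGroup` consists of swaps inside pairs followed by a permutation of the pairs.
The permutation of the pairs acts on two copies of `ι`, so it is even, and only the swaps contribute
to the sign. -/
lemma exists_of_mem_pairGroup {h : Equiv.Perm (ι × Bool)} (hh : h ∈ pairGroup ι) :
    ∃ (π : Equiv.Perm ι) (ε : ι → Bool),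
      (∀ i, h (i, false) = (π i, ε i)) ∧ (∀ i, h (i, true) = (π i, !(ε i))) ∧
      Equiv.Perm.sign h = ∏ i, (if ε i then (-1 : ℤˣ) else 1) := by
  have H := mem_pairGroup.1 hh
  have hinj : Function.Injective fun i => (h (i, false)).1 := by
    intro i j hij
    by_cases hb : (h (i, false)).2 = (h (j, false)).2
    · simpa using h.injective (Prod.ext hij hb)
    · have : h (i, false) = h (j, true) := by
        rw [H j]
        refine Prod.ext hij ?_
        rcases hj : h (j, false) with ⟨a, b⟩
        rw [hj] at hb
        simpa using Bool.eq_not.2 hb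
      simpa using h.injective this
  let π : Equiv.Perm ι := Equiv.ofBijective _ (Finite.injective_iff_bijective.1 hinj)
  let ε : ι → Bool := fun i => (h (i, false)).2
  have h1 : ∀ i, h (i, false) = (π i, ε i) := fun i => rfl
  have h2 : ∀ i, h (i, true) = (π i, !(ε i)) := fun i => by rw [H i, h1 i]; rfl
  refine ⟨π, ε, h1, h2, ?_⟩
  have hdec : h = Equiv.prodCongrLeft (fun _ : Bool => π) *
      Equiv.prodCongrRight (fun i => if ε i then Equiv.boolNot else Equiv.refl Bool) := by
    ext1 ⟨i, b⟩
    cases b <;> cases hε : ε i <;> simp [h1, h2, hε, Equiv.prodCongrRight, Equiv.prodCongrLeft]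
  have hs : Equiv.Perm.sign Equiv.boolNot = -1 := by decide
  rw [hdec, map_mul, Equiv.Perm.sign_prodCongrLeft, Equiv.Perm.sign_prodCongrRight]
  simp only [Fintype.prod_bool, Int.units_mul_self, one_mul]
  refine Finset.prod_congr rfl fun i _ => ?_
  split_ifs
  · exact hs
  · exact Equiv.Perm.sign_refl

lemma pfTerm_mul {A : Matrix (ι × Bool) (ι × Bool) R} (hA : ∀ x y, A x y = -A y x)
    (σ : Equiv.Perm (ι × Bool)) {h : Equiv.Perm (ι × Bool)} (hh : h ∈ pairGroup ι) :
    pfTerm A (σ * h) = pfTerm A σ := by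
  obtain ⟨π, ε, h1, h2, hs⟩ := exists_of_mem_pairGroup hh
  have key : ∀ i, A (σ (h (i, false))) (σ (h (i, true))) =
      (if ε i then -1 else 1) * A (σ (π i, false)) (σ (π i, true)) := by
    intro i
    rw [h1, h2]
    cases ε i
    · simp
    · simpa using hA _ _
  have hsq : (∏ i, (if ε i then (-1 : R) else 1)) * ∏ i, (if ε i then (-1 : R) else 1) = 1 := by
    rw [← Finset.prod_mul_distrib]
    exact Finset.prod_eq_one fun i _ => by split_ifs <;> simp
  have hs' : ((Equiv.Perm.sign h : ℤ) : R) = ∏ i, (if ε i then (-1 : R) else 1) := by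
    rw [hs, Units.coe_prod, Int.cast_prod]
    exact Finset.prod_congr rfl fun i _ => by split_ifs <;> simp
  have hp : ∏ i, A (σ (π i, false)) (σ (π i, true)) = ∏ i, A (σ (i, false)) (σ (i, true)) :=
    Equiv.prod_comp π fun i => A (σ (i, false)) (σ (i, true))
  simp only [pfTerm, Equiv.Perm.mul_apply, key, Finset.prod_mul_distrib, hp, map_mul,
    Units.val_mul, Int.cast_mul, hs']
  linear_combination (((Equiv.Perm.sign σ : ℤ) : R) * ∏ i, A (σ (i, false)) (σ (i, true))) * hsq

lemma pfSum_eq {A : Matrix (ι × Bool) (ι × Bool) R} (hA : ∀ x y, A x y = -A y x) :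
    pfSum A = (Nat.card (pairGroup ι) : R) * pf A := by
  classical
  have h1 : pfSum A = ∑ p : (Equiv.Perm (ι × Bool) ⧸ pairGroup ι) × pairGroup ι,
      pfTerm A p.1.out := by
    refine Fintype.sum_equiv Subgroup.groupEquivQuotientProdSubgroup _ _ fun σ => ?_
    obtain ⟨h, hh⟩ := QuotientGroup.mk_out_eq_mul (pairGroup ι) σ
    change _ = pfTerm A (Quotient.out (σ : Equiv.Perm (ι × Bool) ⧸ pairGroup ι))
    rw [hh, pfTerm_mul hA σ h.2]
  rw [h1, Fintype.sum_prod_type, pf, Finset.mul_sum]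
  simp [Nat.card_eq_fintype_card]

/-- The multilinear expansion of `pfSum` in the rows of `C`: only bijective choices of columns
survive, the others produce determinants with a repeated column. -/
lemma pfSum_congr (C A : Matrix (ι × Bool) (ι × Bool) R) :
    pfSum (C * A * Cᵀ) = C.det * pfSum A := by
  classical
  let e : (ι → (ι × Bool) × (ι × Bool)) ≃ (ι × Bool → ι × Bool) :=
    { toFun := fun p z => if z.2 then (p z.1).2 else (p z.1).1
      invFun := fun f i => (f (i, false), f (i, true))
      left_inv := fun p => by simp
      right_inv := fun f => by ext1 ⟨i, b⟩; cases b <;> simp }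
  let a : (ι × Bool → ι × Bool) → R := fun f => ∏ i, A (f (i, false)) (f (i, true))
  have hentry : ∀ x y, (C * A * Cᵀ) x y =
      ∑ p : (ι × Bool) × (ι × Bool), A p.1 p.2 * (C x p.1 * C y p.2) := by
    intro x y
    rw [Fintype.sum_prod_type_right]
    simp only [Matrix.mul_apply, Matrix.transpose_apply, Finset.sum_mul]
    exact Finset.sum_congr rfl fun _ _ => Finset.sum_congr rfl fun _ _ => by ring
  have hprod : ∀ σ : Equiv.Perm (ι × Bool),
      ∏ i, (C * A * Cᵀ) (σ (i, false)) (σ (i, true)) = ∑ f, a f * ∏ z, C (σ z) (f z) := by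
    intro σ
    simp only [hentry, Finset.prod_univ_sum, Fintype.piFinset_univ]
    refine Fintype.sum_equiv e _ _ fun p => ?_
    simp only [a, e, Equiv.coe_fn_mk, Finset.prod_mul_distrib, Fintype.prod_prod_type,
      Fintype.prod_bool]
    simp [mul_comm]
  have h1 : pfSum (C * A * Cᵀ) = ∑ f, a f * (C.submatrix id f).det := by
    simp only [pfSum, pfTerm, hprod, Matrix.det_apply', Finset.mul_sum, Matrix.submatrix_apply,
      id]
    rw [Finset.sum_comm]
    exact Finset.sum_congr rfl fun _ _ => Finset.sum_congr rfl fun _ _ => by ring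
  rw [h1, pfSum, Finset.mul_sum]
  symm
  refine Finset.sum_of_injOn (fun σ : Equiv.Perm (ι × Bool) => (σ : ι × Bool → ι × Bool))
    (fun σ _ τ _ h => DFunLike.coe_injective h) (fun _ _ => by simp) ?_ ?_
  · intro f _ hf
    have hninj : ¬ Function.Injective f := fun hi =>
      hf ⟨Equiv.ofBijective f (Finite.injective_iff_bijective.1 hi), by simp, rfl⟩
    simp only [Function.Injective, not_forall] at hninj
    obtain ⟨x, y, hxy, hne⟩ := hninj
    rw [Matrix.det_zero_of_column_eq hne (fun k => by simp [hxy]), mul_zero]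
  · intro σ _
    rw [Matrix.det_permute', pfTerm]
    ring

open Classical in
lemma pfTerm_stdJ (σ : Equiv.Perm (ι × Bool)) :
    pfTerm (stdJ ι R) σ = if σ ∈ pairGroup ι then 1 else 0 := by
  split_ifs with h
  · have := pfTerm_mul (stdJ_skew (ι := ι) (R := R)) 1 h
    rw [one_mul] at this
    rw [this]
    simp [pfTerm, stdJ]
  · rw [mem_pairGroup, not_forall] at h
    obtain ⟨i, hi⟩ := h
    rw [pfTerm, Finset.prod_eq_zero (Finset.mem_univ i), mul_zero]
    simp [stdJ, hi]

lemma pfSum_stdJ : pfSum (stdJ ι R) = (Nat.card (pairGroup ι) : R) := by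
  classical
  simp [pfSum, pfTerm_stdJ, Finset.sum_boole, Nat.card_eq_fintype_card, Fintype.card_subtype]

lemma pf_stdJ : pf (stdJ ι ℤ) = 1 := by
  have h := pfSum_eq (stdJ_skew (ι := ι) (R := ℤ))
  rw [pfSum_stdJ] at h
  have h0 : (Nat.card (pairGroup ι) : ℤ) ≠ 0 := by exact_mod_cast Nat.card_pos.ne'
  exact (mul_left_cancel₀ h0 (by rw [← h, mul_one])).symm

/-! ### Reduction modulo `m` -/

/-- Modulo `m`, a matrix that agrees with `stdJ` outside the positions `((·, true), (·, true))` has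
the same Pfaffian summands. If a pair is mapped by `σ` into the elements `(·, true)`, then by
counting another pair is mapped into the elements `(·, false)` and contributes a factor `0`. -/
lemma pfTerm_modEq {m : ℤ} {M : Matrix (ι × Bool) (ι × Bool) ℤ}
    (hM : ∀ x y, ¬ (x.2 = true ∧ y.2 = true) → M x y ≡ stdJ ι ℤ x y [ZMOD m])
    (σ : Equiv.Perm (ι × Bool)) : pfTerm M σ ≡ pfTerm (stdJ ι ℤ) σ [ZMOD m] := by
  unfold pfTerm
  refine Int.ModEq.mul_left _ ?_
  by_cases hff : ∃ i, (σ (i, false)).2 = false ∧ (σ (i, true)).2 = false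
  · obtain ⟨i, hi1, hi2⟩ := hff
    have hz : stdJ ι ℤ (σ (i, false)) (σ (i, true)) = 0 := by
      rcases h1 : σ (i, false) with ⟨j, b⟩
      rcases h2 : σ (i, true) with ⟨k, c⟩
      rw [h1] at hi1
      rw [h2] at hi2
      simp only at hi1 hi2
      simp [stdJ, hi1, hi2]
    have hm : M (σ (i, false)) (σ (i, true)) ≡ 0 [ZMOD m] := by
      have := hM (σ (i, false)) (σ (i, true)) (by simp [hi1])
      rwa [hz] at this
    rw [Finset.prod_eq_zero (f := fun i => stdJ ι ℤ (σ (i, false)) (σ (i, true)))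
      (Finset.mem_univ i) hz]
    exact Int.modEq_zero_iff_dvd.2
      ((Int.modEq_zero_iff_dvd.1 hm).trans (Finset.dvd_prod_of_mem _ (Finset.mem_univ i)))
  · let s : ι × Bool → ℕ := fun x => if x.2 then 1 else 0
    have hle : ∀ i ∈ Finset.univ, 1 ≤ s (σ (i, true)) + s (σ (i, false)) := by
      intro i _
      by_contra hlt
      refine hff ⟨i, ?_, ?_⟩ <;> by_contra hb <;> simp [s, hb] at hlt
    have hsum : ∑ _i : ι, 1 = ∑ i : ι, (s (σ (i, true)) + s (σ (i, false))) := by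
      have h1 := Equiv.sum_comp σ s
      simp only [Fintype.sum_prod_type, Fintype.sum_bool] at h1
      rw [h1]
      simp [s]
    have heq := (Finset.sum_eq_sum_iff_of_le hle).1 hsum
    refine Int.ModEq.prod fun i _ => hM _ _ ?_
    rintro ⟨h1, h2⟩
    have := heq i (Finset.mem_univ i)
    simp [s, h1, h2] at this

lemma pfSum_cast (M : Matrix (ι × Bool) (ι × Bool) ℤ) :
    pfSum (M.map (Int.cast : ℤ → ℚ)) = ((pfSum M : ℤ) : ℚ) := by
  simp [pfSum, pfTerm]

/-- The theorem for matrices indexed by pairs. Scaling by `D = diag(ν, 1)` turns `J` into `stdJ`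
and the integral error `Z` into `D Z D`, which vanishes modulo `m` wherever an index is of the
form `(·, false)`. -/
lemma det_modEq_one {m : ℤ} (ν : ι → ℕ) (hν : ∀ i, 0 < ν i) (hm : ∀ i, m ∣ (ν i : ℤ))
    (J : Matrix (ι × Bool) (ι × Bool) ℚ) (hJ : ∀ x y, J x y = stdJ ι ℚ x y * (ν x.1 : ℚ)⁻¹)
    (C Z : Matrix (ι × Bool) (ι × Bool) ℤ)
    (hZ : C.map (Int.cast : ℤ → ℚ) * J * (C.map (Int.cast : ℤ → ℚ))ᵀ - J =
      Z.map (Int.cast : ℤ → ℚ)) : C.det ≡ 1 [ZMOD m] := by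
  let d : ι × Bool → ℤ := fun x => if x.2 then 1 else ν x.1
  let Dq : Matrix (ι × Bool) (ι × Bool) ℚ := Matrix.diagonal fun x => (d x : ℚ)
  let Cq := C.map (Int.cast : ℤ → ℚ)
  let M : Matrix (ι × Bool) (ι × Bool) ℤ := Matrix.of fun x y => stdJ ι ℤ x y + d x * Z x y * d y
  have hDJ : Dq * J * Dqᵀ = stdJ ι ℚ := by
    ext ⟨i, b⟩ ⟨j, c⟩
    have h0 : (ν i : ℚ) ≠ 0 := by exact_mod_cast (hν i).ne'
    simp only [Dq, Matrix.diagonal_transpose, Matrix.mul_diagonal, Matrix.diagonal_mul, hJ]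
    by_cases hij : i = j
    · subst hij
      cases b <;> cases c <;> simp [stdJ, d, h0]
    · simp [stdJ, Ne.symm hij]
  have hCJC : Cq * J * Cqᵀ = J + Z.map (Int.cast : ℤ → ℚ) := by
    rw [← hZ]; abel
  have hMq : M.map (Int.cast : ℤ → ℚ) = Dq * (Cq * J * Cqᵀ) * Dqᵀ := by
    rw [hCJC, Matrix.mul_add, Matrix.add_mul, hDJ]
    ext x y
    simp only [Dq, Matrix.diagonal_transpose, Matrix.mul_diagonal, Matrix.diagonal_mul,
      Matrix.add_apply, Matrix.map_apply, M, Matrix.of_apply]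
    push_cast
    congr 1
    simp only [stdJ, Matrix.of_apply]
    split_ifs <;> simp
  have hJskew : Jᵀ = -J := by
    ext ⟨i, b⟩ ⟨j, c⟩
    simp only [Matrix.transpose_apply, Matrix.neg_apply, hJ]
    rw [stdJ_skew]
    by_cases hij : i = j
    · subst hij
      ring
    · simp [stdJ, Ne.symm hij]
  have hMskewq : (M.map (Int.cast : ℤ → ℚ))ᵀ = -M.map (Int.cast : ℤ → ℚ) := by
    rw [hMq]
    simp only [Matrix.transpose_mul, Matrix.transpose_transpose, hJskew, Matrix.mul_neg,
      Matrix.neg_mul, Matrix.mul_assoc]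
  have hMskew : ∀ x y, M x y = -M y x := by
    intro x y
    have := congrFun (congrFun hMskewq y) x
    simp only [Matrix.transpose_apply, Matrix.neg_apply, Matrix.map_apply] at this
    exact_mod_cast this
  -- Both `M` and `stdJ` are congruent to `J`, through `D C` and `D`, so `det D` cancels.
  have hsum : ((pfSum M : ℤ) : ℚ) = (C.det : ℚ) * (Nat.card (pairGroup ι) : ℚ) := by
    have hdet : Cq.det = (C.det : ℚ) := (Int.cast_det C).symm
    rw [← pfSum_cast, hMq, pfSum_congr, pfSum_congr, hdet, ← pfSum_stdJ, ← hDJ, pfSum_congr]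
    ring
  have hdet : C.det = pf M := by
    have h1 : pfSum M = C.det * (Nat.card (pairGroup ι) : ℤ) := by exact_mod_cast hsum
    rw [pfSum_eq hMskew, mul_comm] at h1
    have h0 : (Nat.card (pairGroup ι) : ℤ) ≠ 0 := by exact_mod_cast Nat.card_pos.ne'
    exact (mul_right_cancel₀ h0 h1).symm
  rw [hdet, ← pf_stdJ (ι := ι)]
  refine Int.ModEq.sum fun q _ => pfTerm_modEq ?_ _
  intro x y hxy
  refine (Int.modEq_iff_dvd.2 ?_).symm
  have hval : M x y - stdJ ι ℤ x y = d x * Z x y * d y := by simp [M]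
  rw [hval]
  rcases hx : x.2 with _ | _
  · exact Dvd.dvd.mul_right (Dvd.dvd.mul_right (by simpa [d, hx] using hm x.1) _) _
  · have hy : y.2 = false := by simpa [hx] using hxy
    exact Dvd.dvd.mul_left (by simpa [d, hy] using hm y.1) _

end

/-! ### Passage from pairs to `Fin (2 * r)` -/

/-- The bijection `(i, b) ↦ 2 i + b`, with `false` and `true` read as `0` and `1`. -/
def pairEquiv (r : ℕ) : Fin r × Bool ≃ Fin (2 * r) :=
  ((Equiv.refl (Fin r)).prodCongr finTwoEquiv.symm).trans
    (finProdFinEquiv.trans (finCongr (Nat.mul_comm r 2)))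

lemma pairEquiv_val (r : ℕ) (i : Fin r) (b : Bool) :
    (pairEquiv r (i, b)).val = 2 * i.val + (if b then 1 else 0) := by
  cases b <;> simp [pairEquiv, finTwoEquiv, add_comm]

lemma stdSymplJ_pairEquiv (r : ℕ) (n : ℕ → ℕ) (x y : Fin r × Bool) :
    stdSymplJ r n (pairEquiv r x) (pairEquiv r y) =
      stdJ (Fin r) ℚ x y * (n x.1.val : ℚ)⁻¹ := by
  obtain ⟨i, b⟩ := x
  obtain ⟨j, c⟩ := y
  simp only [stdSymplJ, stdJ, Matrix.of_apply, pairEquiv_val, pairSwap_apply, Prod.mk.injEq,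
    Fin.ext_iff]
  by_cases hij : i = j
  · subst hij
    cases b <;> cases c <;> simp
  · have h : i.val ≠ j.val := fun h => hij (Fin.ext h)
    rw [if_neg (by cases b <;> cases c <;> simp <;> omega),
      if_neg (by cases b <;> cases c <;> simp <;> omega), if_neg (by omega), zero_mul]

end PfaffianSum

/-- Let `r ≥ 1` and `n₁, …, n_r` (0-indexed as `n 0, …, n (r-1)`) be positive
integers with `nᵢ ∣ nᵢ₊₁`.  If `C` is a `2r × 2r` integer matrix such that every entry of
`C·J·Cᵗ − J` is an integer, then `det C ≡ 1 (mod n₁)`. -/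
theorem det_modEq_one_of_preserves_symplectic (r : ℕ) (hr : 0 < r) (n : ℕ → ℕ)
    (hpos : ∀ i < r, 0 < n i) (hdvd : ∀ i, i + 1 < r → n i ∣ n (i + 1))
    (C : Matrix (Fin (2 * r)) (Fin (2 * r)) ℤ)
    (hC : ∀ i j, ∃ z : ℤ,
      (C.map (Int.cast : ℤ → ℚ) * stdSymplJ r n * (C.map (Int.cast : ℤ → ℚ))ᵀ - stdSymplJ r n) i j
        = (z : ℚ)) :
    C.det ≡ 1 [ZMOD (n 0 : ℤ)] := by
  have hdvd0 : ∀ i < r, n 0 ∣ n i := by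
    intro i
    induction i with
    | zero => exact fun _ => dvd_rfl
    | succ k ih => exact fun hk => (ih (by omega)).trans (hdvd k hk)
  choose z hz using hC
  let e := PfaffianSum.pairEquiv r
  rw [← Matrix.det_submatrix_equiv_self e C]
  refine PfaffianSum.det_modEq_one (fun i : Fin r => n i) (fun i => hpos i i.2)
    (fun i => Int.natCast_dvd_natCast.2 (hdvd0 i i.2)) ((stdSymplJ r n).submatrix e e)
    (fun x y => PfaffianSum.stdSymplJ_pairEquiv r n x y) _ (Matrix.of fun x y => z (e x) (e y)) ?_
  ext x y
  have h := hz (e x) (e y)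
  simp only [Matrix.map_apply, Matrix.of_apply]
  rw [← h, ← Matrix.submatrix_map, Matrix.transpose_submatrix, Matrix.submatrix_mul_equiv,
    Matrix.submatrix_mul_equiv]
  rfl
end

section
/- Let A be an abelian group and let (a₁, …, a_d) and (b₁, …, b_d) be two d-tuples of elements of A, each of which generates A as a group. Say that two d-tuples are related by an elementary operation if one is obtained from the other by replacing the i-th entry aᵢ with aᵢ + m·a_j for some indices i ≠ j and some integer m. Then (a₁, …, a_d) and (b₁, …, b_d) are related by a finite sequence of elementary operations if and only if a₁ ∧ ⋯ ∧ a_d = b₁ ∧ ⋯ ∧ b_d in ⋀^d(A). -/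
/-!
Elementary operations preserve `a₁ ∧ ⋯ ∧ a_d` because that expression is alternating and
multilinear. The converse is proved by induction on `d`, splitting off at each step a cyclic direct
summand of *largest* order.

If `A` is finitely generated, there are `n` and a surjection `φ : A → ℤ/n` with `n • A = 0`
(`exists_surjective_zmod`): for infinite `A` take `n = 0`, and for finite `A` take a complex
character whose order is the exponent of `A`. If `d ≥ 2`, the Euclidean algorithm brings the
`φ`-values of any generating `d`-tuple to `(1, 0, …, 0)` (`exists_normalized`). Since `n` kills the
zeroth entry, the remaining `d - 1` entries then generate `ker φ` (`closure_tail_eq_top`). Once both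
tuples are in this form, their zeroth entries differ by an element of `ker φ`, so they can be made
equal (`reach_cons_add`), and it remains to compare two generating `(d - 1)`-tuples of `ker φ`.
Their wedges agree (`ιMulti_eq_of_cons`): contraction with `φ` followed by the projection onto
`ker φ` sends `e ∧ c₁ ∧ ⋯ ∧ c_{d-1}` to `c₁ ∧ ⋯ ∧ c_{d-1}`. It is well defined because `n` kills
`⋀^{d-1} (ker φ)`, which is where `d - 1 ≥ 1` matters. The induction ends at `d = 1`, where
`⋀¹ A = A`.
-/

/-! ### Elementary operations -/

/-- A single elementary operation: `y` is `x` with `m • x j` added to the entry `x i`, `i ≠ j`. -/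
def ElemStep {ι A : Type*} [DecidableEq ι] [AddCommGroup A] (x y : ι → A) : Prop :=
  ∃ (i j : ι) (m : ℤ), i ≠ j ∧ y = Function.update x i (x i + m • x j)

/-- `Reach x y`: the tuple `y` is obtained from `x` by finitely many elementary operations. -/
def Reach {ι A : Type*} [DecidableEq ι] [AddCommGroup A] (x y : ι → A) : Prop :=
  Relation.ReflTransGen ElemStep x y

section Basic

variable {ι A B : Type*} [DecidableEq ι] [AddCommGroup A] [AddCommGroup B]

theorem ElemStep.symm {x y : ι → A} (h : ElemStep x y) : ElemStep y x := by
  obtain ⟨i, j, m, hij, rfl⟩ := h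
  refine ⟨i, j, -m, hij, ?_⟩
  simp [Function.update_of_ne hij.symm]

theorem Reach.refl (x : ι → A) : Reach x x := Relation.ReflTransGen.refl

theorem Reach.of_eq {x y : ι → A} (h : x = y) : Reach x y := h ▸ Reach.refl x

theorem Reach.trans {x y z : ι → A} (h : Reach x y) (h' : Reach y z) : Reach x z :=
  Relation.ReflTransGen.trans h h'

theorem ElemStep.reach {x y : ι → A} (h : ElemStep x y) : Reach x y :=
  Relation.ReflTransGen.single h

theorem Reach.symm {x y : ι → A} (h : Reach x y) : Reach y x := by
  induction h with
  | refl => exact Reach.refl _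
  | tail _ h ih => exact h.symm.reach.trans ih

theorem reach_update (x : ι → A) {i j : ι} (hij : i ≠ j) (m : ℤ) :
    Reach x (Function.update x i (x i + m • x j)) :=
  ElemStep.reach ⟨i, j, m, hij, rfl⟩

theorem Reach.comp_hom {x y : ι → A} (h : Reach x y) (f : A →+ B) :
    Reach (f ∘ x) (f ∘ y) := by
  refine Relation.ReflTransGen.lift (f ∘ ·) ?_ _ _ h
  rintro x y ⟨i, j, m, hij, rfl⟩
  refine ⟨i, j, m, hij, ?_⟩
  simp [Function.comp_update]

/-- Elementary operations on the image of a tuple under a homomorphism lift to the tuple itself. -/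
theorem Reach.exists_lift (f : A →+ B) {x : ι → A} {v : ι → B} (h : Reach (f ∘ x) v) :
    ∃ y, Reach x y ∧ f ∘ y = v := by
  induction h with
  | refl => exact ⟨x, Reach.refl _, rfl⟩
  | tail _ h ih =>
    obtain ⟨y, hy, rfl⟩ := ih
    obtain ⟨i, j, m, hij, rfl⟩ := h
    exact ⟨_, hy.trans (reach_update y hij m), by simp [Function.comp_update]⟩

theorem Reach.closure_eq_top {x y : ι → A} (h : Reach x y)
    (hx : AddSubgroup.closure (Set.range x) = ⊤) : AddSubgroup.closure (Set.range y) = ⊤ := by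
  induction h with
  | refl => exact hx
  | @tail y z _ h ih =>
    obtain ⟨i, j, m, hij, hy⟩ := h.symm
    rw [eq_top_iff, ← ih, AddSubgroup.closure_le, hy]
    have hz : ∀ k, z k ∈ AddSubgroup.closure (Set.range z) := fun k =>
      AddSubgroup.subset_closure ⟨k, rfl⟩
    rintro _ ⟨k, rfl⟩
    rcases eq_or_ne k i with rfl | hk
    · simpa using add_mem (hz k) (zsmul_mem (hz j) m)
    · simpa [hk] using hz k

theorem Reach.ιMulti_eq {d : ℕ} {x y : Fin d → A} (h : Reach x y) :
    ExteriorAlgebra.ιMulti ℤ d x = ExteriorAlgebra.ιMulti ℤ d y := by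
  induction h with
  | refl => rfl
  | @tail y z _ h ih =>
    obtain ⟨i, j, m, hij, rfl⟩ := h
    rw [ih, AlternatingMap.map_update_add, AlternatingMap.map_update_smul,
      AlternatingMap.map_update_self _ _ hij]
    simp

end Basic

section Cons

variable {A : Type*} [AddCommGroup A] {k : ℕ}

theorem Reach.cons {x y : Fin k → A} (h : Reach x y) (e : A) :
    Reach (Fin.cons e x : Fin (k + 1) → A) (Fin.cons e y) := by
  refine Relation.ReflTransGen.lift (fun z => (Fin.cons e z : Fin (k + 1) → A)) ?_ _ _ h
  rintro x y ⟨i, j, m, hij, rfl⟩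
  refine ⟨i.succ, j.succ, m, by simpa using hij, ?_⟩
  simp [Fin.cons_update]

/-- Any element of the subgroup generated by the other entries may be added to the zeroth one. -/
theorem reach_cons_add (t : Fin k → A) {s : A} (hs : s ∈ AddSubgroup.closure (Set.range t)) :
    ∀ z : A, Reach (Fin.cons z t : Fin (k + 1) → A) (Fin.cons (z + s) t) := by
  induction hs using AddSubgroup.closure_induction with
  | mem s hs =>
    obtain ⟨j, rfl⟩ := hs
    intro z
    refine ElemStep.reach ⟨0, j.succ, 1, (Fin.succ_ne_zero j).symm, ?_⟩
    simp [Fin.update_cons_zero]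
  | zero => intro z; simpa using Reach.refl _
  | add s s' _ _ h h' => intro z; simpa [add_assoc] using (h z).trans (h' (z + s))
  | neg s _ h => intro z; simpa using (h (z + -s)).symm

end Cons

/-! ### Normalizing the values of a surjection onto a cyclic group -/

/-- The Euclidean algorithm: an integer tuple can be reduced to one with at most one nonzero
entry, placed at the index `0`. -/
theorem reach_int {k : ℕ} (c : Fin (k + 1) → ℤ) :
    ∃ g : ℤ, Reach c (Fin.cons g fun _ => 0) := by
  induction hN : ∑ i, (c i).natAbs using Nat.strong_induction_on generalizing c with
  | _ N ih =>
  subst hN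
  by_cases h : ∃ i j, i ≠ j ∧ c i ≠ 0 ∧ c j ≠ 0
  -- Reduce the larger of two nonzero entries modulo the smaller one.
  · obtain ⟨i, j, hij, hi, hj, hle⟩ :
        ∃ i j, i ≠ j ∧ c i ≠ 0 ∧ c j ≠ 0 ∧ (c j).natAbs ≤ (c i).natAbs := by
      obtain ⟨i, j, hij, hi, hj⟩ := h
      rcases le_total (c j).natAbs (c i).natAbs with hle | hle
      · exact ⟨i, j, hij, hi, hj, hle⟩
      · exact ⟨j, i, hij.symm, hj, hi, hle⟩
    have hlt : (c i + (-(c i / c j)) • c j).natAbs < (c i).natAbs := by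
      have h1 : c i + (-(c i / c j)) • c j = c i % c j := by
        rw [smul_eq_mul, Int.emod_def]; ring
      rw [h1]
      have h2 := Int.emod_lt_abs (c i) hj
      have h3 := Int.emod_nonneg (c i) hj
      rw [Int.abs_eq_natAbs] at h2
      clear h1
      omega
    have hsum : ∑ l, (Function.update c i (c i + (-(c i / c j)) • c j) l).natAbs <
        ∑ l, (c l).natAbs := by
      refine Finset.sum_lt_sum (fun l _ => ?_) ⟨i, Finset.mem_univ _, by simpa using hlt⟩
      rcases eq_or_ne l i with rfl | hl
      · simpa using hlt.le
      · simp [hl]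
    obtain ⟨g, hg⟩ := ih _ hsum _ rfl
    exact ⟨g, (reach_update c hij _).trans hg⟩
  · push Not at h
    by_cases h0 : ∃ i, i ≠ 0 ∧ c i ≠ 0
    -- The only nonzero entry is moved to the index `0`.
    · obtain ⟨i, hi, hci⟩ := h0
      refine ⟨c i, (reach_update c hi.symm 1).trans ?_⟩
      refine (reach_update _ hi (-1)).trans ?_
      refine Reach.of_eq ?_
      have hz : ∀ l, l ≠ i → c l = 0 := fun l hl => h i l hl.symm hci
      ext l
      refine Fin.cases ?_ (fun l => ?_) l
      · simp [hz 0 hi.symm, hi.symm]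
      · rcases eq_or_ne l.succ i with rfl | hl
        · simp [hz 0 hi.symm]
        · simp [hl, hz _ hl]
    · push Not at h0
      refine ⟨c 0, ?_⟩
      refine Reach.of_eq ?_
      ext l
      refine Fin.cases ?_ (fun l => ?_) l
      · simp
      · simp [h0 l.succ (Fin.succ_ne_zero l)]

/-- Since `(g, 0, …, 0)` generates `ℤ/n` exactly when `g` is a unit, the presence of a second
coordinate allows `g` to be replaced by `1`. -/
theorem reach_zmod {k n : ℕ} (v : Fin (k + 2) → ZMod n)
    (hv : AddSubgroup.closure (Set.range v) = ⊤) : Reach v (Fin.cons 1 fun _ => 0) := by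
  obtain ⟨c, rfl⟩ : ∃ c : Fin (k + 2) → ℤ, Int.castAddHom (ZMod n) ∘ c = v := by
    choose c hc using fun i => ZMod.intCast_surjective (v i)
    exact ⟨c, funext hc⟩
  obtain ⟨g, hg⟩ := reach_int c
  have h1 := hg.comp_hom (Int.castAddHom (ZMod n))
  have h2 := h1.closure_eq_top hv
  obtain ⟨u, hu⟩ : ∃ u : ℤ, u • (g : ZMod n) = 1 := by
    have : AddSubgroup.closure (Set.range (Int.castAddHom (ZMod n) ∘
        (Fin.cons g fun _ => 0 : Fin (k + 2) → ℤ))) ≤ AddSubgroup.zmultiples (g : ZMod n) := by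
      rw [AddSubgroup.closure_le]
      rintro _ ⟨l, rfl⟩
      refine Fin.cases ?_ (fun l => ?_) l
      · simp
      · simp
    rw [h2] at this
    exact AddSubgroup.mem_zmultiples_iff.1 (this (AddSubgroup.mem_top (1 : ZMod n)))
  -- With `u * g = 1`: `(g, 0) → (g, 1) → (1, 1) → (1, 0)` in the first two coordinates.
  refine h1.trans ((reach_update _ (i := 1) (j := 0) (by simp) u).trans
    ((reach_update _ (i := 0) (j := 1) (by simp) (1 - g)).trans
    ((reach_update _ (i := 1) (j := 0) (by simp) (-1)).trans ?_)))
  refine Reach.of_eq ?_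
  ext l
  refine Fin.cases ?_ (fun l => Fin.cases ?_ (fun l => ?_) l) l
  · simp at hu
    simp [hu, Fin.cons_one]
  · simp at hu
    simp [hu, Fin.cons_one]
  · have : l.succ.succ ≠ 1 := by simp [Fin.ext_iff]
    simp [this]

/-- Every generating tuple with at least two entries can be brought to the form `(e, t)` with
`φ e = 1` and all entries of `t` in `ker φ`. -/
theorem exists_normalized {A : Type*} [AddCommGroup A] {k n : ℕ} (φ : A →+ ZMod n)
    (hφ : Function.Surjective φ) (x : Fin (k + 2) → A)
    (hx : AddSubgroup.closure (Set.range x) = ⊤) :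
    ∃ (e : A) (t : Fin (k + 1) → φ.ker), φ e = 1 ∧
      Reach x (Fin.cons e fun i => (t i : A)) := by
  have hv : AddSubgroup.closure (Set.range (φ ∘ x)) = ⊤ := by
    rw [Set.range_comp, ← AddMonoidHom.map_closure, hx, ← AddMonoidHom.range_eq_map,
      AddMonoidHom.range_eq_top.2 hφ]
  obtain ⟨y, hy, hφy⟩ := (reach_zmod _ hv).exists_lift φ
  refine ⟨y 0, fun i => ⟨y i.succ, ?_⟩, ?_, ?_⟩
  · simpa using congrFun hφy i.succ
  · simpa using congrFun hφy 0
  · convert hy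
    exact Fin.cons_self_tail y

/-- In a generating tuple `(e, t)` with `φ e = 1` and `t` in `ker φ`, the entry `e` can contribute
to an element of `ker φ` only through a multiple of `n • e = 0`; so `t` generates `ker φ`. -/
theorem closure_tail_eq_top {A : Type*} [AddCommGroup A] {k n : ℕ} (φ : A →+ ZMod n)
    (hn : ∀ x : A, n • x = 0) (e : A) (t : Fin k → φ.ker) (he : φ e = 1)
    (hx : AddSubgroup.closure (Set.range (Fin.cons e fun i => (t i : A) : Fin (k + 1) → A)) = ⊤) :
    AddSubgroup.closure (Set.range t) = ⊤ := by
  rw [eq_top_iff]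
  rintro z -
  have hz : (z : A) ∈ AddSubgroup.zmultiples e ⊔
      (AddSubgroup.closure (Set.range t)).map φ.ker.subtype := by
    rw [AddMonoidHom.map_closure, AddSubgroup.zmultiples_eq_closure, ← AddSubgroup.closure_union]
    have : (Set.range (Fin.cons e fun i => (t i : A) : Fin (k + 1) → A)) =
        {e} ∪ φ.ker.subtype '' Set.range t := by
      rw [Fin.range_cons, ← Set.range_comp]
      rfl
    rw [← this, hx]
    trivial
  obtain ⟨_, ⟨m, rfl⟩, _, ⟨s, hs, rfl⟩, hsum⟩ := AddSubgroup.mem_sup.1 hz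
  have hm : (m : ZMod n) = 0 := by
    have h1 : φ (z : A) = 0 := z.2
    have h2 : φ (s : A) = 0 := s.2
    simpa [← hsum, he, h2] using h1
  obtain ⟨q, rfl⟩ := (ZMod.intCast_zmod_eq_zero_iff_dvd m n).1 hm
  have : z = s := by
    ext
    rw [← hsum]
    simp [mul_smul, hn]
  rwa [this]

/-! ### A surjection onto a cyclic group of largest order -/

/-- A finitely generated abelian group maps onto a cyclic group `ℤ/n` whose order `n` kills the
whole group; `n = 0`, with `ZMod 0 = ℤ`, is the case of an infinite group. -/
theorem exists_surjective_zmod (A : Type*) [AddCommGroup A] [AddGroup.FG A] :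
    ∃ (n : ℕ) (φ : A →+ ZMod n), Function.Surjective φ ∧ ∀ x : A, n • x = 0 := by
  by_cases hA : Finite A
  · have : NeZero (Monoid.exponent (Multiplicative A)) := ⟨Monoid.exponent_ne_zero_of_finite⟩
    obtain ⟨E⟩ := CommGroup.monoidHom_mulEquiv_of_hasEnoughRootsOfUnity (Multiplicative A) ℂ
    have : Finite (Multiplicative A →* ℂˣ) := Finite.of_equiv _ E.symm.toEquiv
    obtain ⟨χ, hχ⟩ := Monoid.exists_orderOf_eq_exponent
      (Monoid.ExponentExists.of_finite (G := Multiplicative A →* ℂˣ))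
    rw [Monoid.exponent_eq_of_mulEquiv E] at hχ
    have : Finite χ.range := Finite.of_surjective _ χ.rangeRestrict_surjective
    -- A finite subgroup of `ℂˣ` is cyclic.
    have hc : IsCyclic χ.range := inferInstance
    have e := zmodCyclicMulEquiv hc
    refine ⟨Nat.card χ.range, AddMonoidHom.toMultiplicative.symm
      (e.symm.toMonoidHom.comp χ.rangeRestrict), ?_, ?_⟩
    · exact e.symm.surjective.comp χ.rangeRestrict_surjective
    · intro x
      have h2 : orderOf χ ∣ Nat.card χ.range := by
        refine orderOf_dvd_of_pow_eq_one (MonoidHom.ext fun y => ?_)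
        exact congrArg Subtype.val (pow_card_eq_one' (x := χ.rangeRestrict y))
      rw [hχ] at h2
      exact Monoid.exponent_dvd_iff_forall_pow_eq_one.1 h2 (Multiplicative.ofAdd x)
  -- `A` is not torsion, so `A` modulo torsion is free and nonzero, and a coordinate is onto `ℤ`.
  · have : Module.Finite ℤ A := Module.Finite.iff_addGroup_fg.2 inferInstance
    let T := Submodule.torsion ℤ A
    let b := Module.Free.chooseBasis ℤ (A ⧸ T)
    have hne : Nonempty (Module.Free.ChooseBasisIndex ℤ (A ⧸ T)) := by
      by_contra hne
      rw [not_nonempty_iff] at hne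
      have hs : Subsingleton (A ⧸ T) := b.repr.toEquiv.subsingleton
      have hT : T = ⊤ := Submodule.Quotient.subsingleton_iff.1 hs
      exact hA (Module.finite_of_fg_torsion A ((Submodule.isTorsion'_iff_torsion'_eq_top _).2 hT))
    obtain ⟨i⟩ := hne
    have hsurj : ∀ m : ℤ, ∃ x, b.coord i (T.mkQ x) = m := by
      intro m
      obtain ⟨x, hx⟩ := T.mkQ_surjective (m • b i)
      exact ⟨x, by rw [hx]; simp⟩
    exact ⟨0, ((b.coord i).comp T.mkQ).toAddMonoidHom, hsurj, by simp⟩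

/-! ### Contraction -/

/-- The factor `e` of `e ∧ s₀ ∧ ⋯ ∧ s_k` can be cancelled, by contraction with `φ`. -/
theorem ιMulti_eq_of_cons {A : Type*} [AddCommGroup A] {k n : ℕ} (φ : A →+ ZMod n)
    (hn : ∀ x : A, n • x = 0) (e : A) (he : φ e = 1) (s t : Fin (k + 1) → φ.ker)
    (h : ExteriorAlgebra.ιMulti ℤ (k + 2) (Fin.cons e fun i => (s i : A) : Fin (k + 2) → A) =
      ExteriorAlgebra.ιMulti ℤ (k + 2) (Fin.cons e fun i => (t i : A) : Fin (k + 2) → A)) :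
    ExteriorAlgebra.ιMulti ℤ (k + 1) s = ExteriorAlgebra.ιMulti ℤ (k + 1) t := by
  -- `σ` is the section `1 ↦ e` of `φ`, and `π` the resulting projection onto `ker φ`.
  let σ : ZMod n →+ A := ZMod.lift n ⟨zmultiplesHom A e, by simpa using hn e⟩
  have hσ : ∀ x, φ (σ x) = x := by
    intro x
    obtain ⟨m, rfl⟩ := ZMod.intCast_surjective x
    simp [σ, he]
  let π : A →+ φ.ker := (AddMonoidHom.id A - σ.comp φ).codRestrict φ.ker (by
    intro x
    simp [AddMonoidHom.mem_ker, hσ])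
  have hπ : ∀ x : φ.ker, π x = x := by
    intro x
    have hx : φ (x : A) = 0 := x.2
    ext
    simp [π, hx]
  let g : A [⋀^Fin (k + 1)]→ₗ[ℤ] ExteriorAlgebra ℤ φ.ker :=
    (ExteriorAlgebra.ιMulti ℤ (k + 1)).compLinearMap π.toIntLinearMap
  have hg : (n : ℤ) • g = 0 := by
    ext v
    -- There is at least one argument, and it absorbs the factor `n`.
    have := g.map_update_smul v 0 (n : ℤ) (v 0)
    rw [natCast_zsmul, hn, AlternatingMap.map_update_zero, Function.update_eq_self] at this
    simpa using this.symm
  -- The contraction `x₀ ∧ ⋯ ∧ x_{k+1} ↦ ∑ i, (-1)ⁱ φ(xᵢ) π(x₀) ∧ ⋯ (omit i) ⋯ ∧ π(x_{k+1})`.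
  let c : A →ₗ[ℤ] A [⋀^Fin (k + 1)]→ₗ[ℤ] ExteriorAlgebra ℤ φ.ker :=
    ((ZMod.lift n ⟨zmultiplesHom _ g, by simpa using hg⟩).comp φ).toIntLinearMap
  have hce : c e = g := by
    have : φ e = ((1 : ℤ) : ZMod n) := by simpa using he
    simp only [c, AddMonoidHom.coe_toIntLinearMap, AddMonoidHom.comp_apply, this, ZMod.lift_coe]
    simp
  have key : ∀ u : Fin (k + 1) → φ.ker,
      AlternatingMap.alternatizeUncurryFin c (Fin.cons e fun i => (u i : A)) =
        ExteriorAlgebra.ιMulti ℤ (k + 1) u := by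
    intro u
    have hc0 : ∀ i, c (u i : A) = 0 := by
      intro i
      have hu : φ (u i : A) = 0 := (u i).2
      simp [c, hu]
    rw [AlternatingMap.alternatizeUncurryFin_apply, Fin.sum_univ_succ]
    simp only [Fin.cons_zero, Fin.cons_succ, hc0, hce]
    simp only [AlternatingMap.zero_apply, smul_zero, Finset.sum_const_zero, add_zero,
      Fin.val_zero, pow_zero, one_smul, g, AlternatingMap.compLinearMap_apply]
    congr 1
    ext i
    simp [Fin.removeNth, hπ]
  have hl := congrArg
    (ExteriorAlgebra.liftAlternating (R := ℤ)
      (fun i => if hi : i = k + 2 then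
        hi ▸ AlternatingMap.alternatizeUncurryFin c else 0)) h
  rw [ExteriorAlgebra.liftAlternating_apply_ιMulti,
    ExteriorAlgebra.liftAlternating_apply_ιMulti] at hl
  simpa [key] using hl

/-! ### The induction -/

theorem reach_of_ιMulti_eq (k : ℕ) : ∀ {A : Type*} [AddCommGroup A] (a b : Fin (k + 1) → A),
    AddSubgroup.closure (Set.range a) = ⊤ → AddSubgroup.closure (Set.range b) = ⊤ →
    ExteriorAlgebra.ιMulti ℤ (k + 1) a = ExteriorAlgebra.ιMulti ℤ (k + 1) b → Reach a b := by
  induction k with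
  | zero =>
    intro A _ a b _ _ h
    have : a = b := by
      ext i
      rw [Fin.eq_zero i]
      simpa [ExteriorAlgebra.ιMulti_apply] using h
    rw [this]
    exact Reach.refl _
  | succ k ih =>
    intro A _ a b ha hb h
    have : AddGroup.FG A := ⟨⟨(Set.finite_range a).toFinset, by simpa using ha⟩⟩
    obtain ⟨n, φ, hφ, hn⟩ := exists_surjective_zmod A
    obtain ⟨e, s, he, has⟩ := exists_normalized φ hφ a ha
    obtain ⟨f, t, hf, hbt⟩ := exists_normalized φ hφ b hb
    have hs := closure_tail_eq_top φ hn e s he (has.closure_eq_top ha)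
    have ht := closure_tail_eq_top φ hn f t hf (hbt.closure_eq_top hb)
    -- `e - f ∈ ker φ` lies in the span of `t`, so `f` can be replaced by `e`.
    have hft : Reach (Fin.cons f fun i => (t i : A) : Fin (k + 2) → A)
        (Fin.cons e fun i => (t i : A)) := by
      have hmem : e - f ∈ AddSubgroup.closure (Set.range fun i => (t i : A)) := by
        have h1 : (⟨e - f, by simp [AddMonoidHom.mem_ker, he, hf]⟩ : φ.ker) ∈
            AddSubgroup.closure (Set.range t) := by rw [ht]; trivial
        have h2 := AddSubgroup.mem_map_of_mem φ.ker.subtype h1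
        rw [AddMonoidHom.map_closure, ← Set.range_comp] at h2
        exact h2
      simpa using reach_cons_add (fun i => (t i : A)) hmem f
    have hbe := hbt.trans hft
    have hw := ιMulti_eq_of_cons φ hn e he s t
      (has.ιMulti_eq.symm.trans (h.trans hbe.ιMulti_eq))
    exact has.trans ((((ih s t hs ht hw).comp_hom φ.ker.subtype).cons e).trans hbe.symm)

/-- Two generating `d`-tuples of an abelian group `A` are related by a finite
sequence of elementary operations (replacing `aᵢ` by `aᵢ + m·a_j` for some `i ≠ j`, `m ∈ ℤ`)
if and only if `a₁ ∧ ⋯ ∧ a_d = b₁ ∧ ⋯ ∧ b_d` in `⋀^d(A)`. -/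
theorem elementary_operations_iff_wedge_eq {A : Type*} [AddCommGroup A] {d : ℕ}
    (a b : Fin d → A)
    (ha : AddSubgroup.closure (Set.range a) = ⊤)
    (hb : AddSubgroup.closure (Set.range b) = ⊤) :
    Relation.ReflTransGen
        (fun x y : Fin d → A =>
          ∃ (i j : Fin d) (m : ℤ), i ≠ j ∧ y = Function.update x i (x i + m • x j)) a b ↔
      ExteriorAlgebra.ιMulti ℤ d a = ExteriorAlgebra.ιMulti ℤ d b := by
  refine ⟨fun h => Reach.ιMulti_eq h, fun h => ?_⟩
  cases d with
  | zero =>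
    rw [Subsingleton.elim a b]
  | succ k => exact reach_of_ιMulti_eq k a b ha hb h
end

section
/- Let A be an abelian group and let (a₁, …, a_d) and (b₁, …, b_d) be two d-tuples of elements of A, each of which generates A as a group. Then the following are equivalent: (a) there exists a matrix N = (n_{ij}) in GL_d(ℤ) such that bᵢ = n_{i1}·a₁ + ⋯ + n_{id}·a_d for every i = 1, …, d; (b) a₁ ∧ ⋯ ∧ a_d = b₁ ∧ ⋯ ∧ b_d or a₁ ∧ ⋯ ∧ a_d = −(b₁ ∧ ⋯ ∧ b_d) in ⋀^d(A). -/
/-!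
One direction is `N a` having wedge `det N • (a₁ ∧ ⋯ ∧ a_d)`.

For the converse, let `n` be the exponent of `A` (`0` if `A` is infinite). There is a surjection
`χ : A → ℤ/n` (`exists_character`). If `d ≥ 2`, Euclid's algorithm moves both tuples by `GL_d(ℤ)` so
that `χ` takes them to `(1, 0, …, 0)` (`glRel_single_one`). Since `n` kills `A`, the tails of both
tuples then generate `ker χ`, and the two heads, differing by an element of `ker χ`, can be made
equal. Induction on `ker χ` and the tails shows that both tuples can be moved to `(c₁, …, c_d)`
and `(c₁, …, c_{d-1}, u c_d)` (`exists_normal_form`), where all relations among the `cⱼ`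
have coefficients divisible by some `m` with `m c_d = 0`. Hence `A` maps to `(ℤ/m)^d` with the
`cⱼ` going to the unit vectors, and the determinant there shows that
`c₁ ∧ ⋯ ∧ c_d` has order divisible by `m` (`dvd_of_wedge_eq`). Equality of the wedges up to sign
thus gives `u ≡ ±1` modulo `m`, so `u c_d = ± c_d`, and a sign change finishes the proof.
-/

universe u

/-- `GLRel a b`: some integer matrix of determinant `±1` takes the tuple `a` to the tuple `b`. -/
def GLRel {A : Type*} [AddCommGroup A] {d : ℕ} (a b : Fin d → A) : Prop :=
  ∃ N : Matrix (Fin d) (Fin d) ℤ, IsUnit N.det ∧ b = fun i => ∑ j, N i j • a j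

section GLRel
variable {A B : Type*} [AddCommGroup A] [AddCommGroup B] {d : ℕ}

theorem act_mul (M N : Matrix (Fin d) (Fin d) ℤ) (a : Fin d → A) (i : Fin d) :
    ∑ j, M i j • ∑ k, N j k • a k = ∑ k, (M * N) i k • a k := by
  simp_rw [Matrix.mul_apply, Finset.sum_smul, Finset.smul_sum, smul_smul]
  exact Finset.sum_comm

theorem GLRel.refl (a : Fin d → A) : GLRel a a :=
  ⟨1, by simp, by ext i; simp [Matrix.one_apply, ite_smul]⟩

theorem GLRel.trans {a b c : Fin d → A} (h : GLRel a b) (h' : GLRel b c) : GLRel a c := by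
  obtain ⟨N, hN, rfl⟩ := h
  obtain ⟨M, hM, rfl⟩ := h'
  exact ⟨M * N, by rw [Matrix.det_mul]; exact hM.mul hN, by ext i; rw [act_mul]⟩

theorem GLRel.symm {a b : Fin d → A} (h : GLRel a b) : GLRel b a := by
  obtain ⟨N, hN, rfl⟩ := h
  refine ⟨N⁻¹, Matrix.isUnit_nonsing_inv_det N hN, ?_⟩
  ext i
  rw [act_mul, Matrix.nonsing_inv_mul N hN]
  simp [Matrix.one_apply, ite_smul]

/-- A `GL_d(ℤ)`-move on the image of a tuple under a homomorphism lifts to the tuple itself. -/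
theorem GLRel.lift (f : A →+ B) {a : Fin d → A} {w : Fin d → B} (h : GLRel (f ∘ a) w) :
    ∃ a', GLRel a a' ∧ f ∘ a' = w := by
  obtain ⟨N, hN, rfl⟩ := h
  exact ⟨_, ⟨N, hN, rfl⟩, by ext i; simp⟩

theorem GLRel.map (f : A →+ B) {a a' : Fin d → A} (h : GLRel a a') :
    GLRel (f ∘ a) (f ∘ a') := by
  obtain ⟨N, hN, rfl⟩ := h
  exact ⟨N, hN, by ext i; simp⟩

theorem GLRel.closure_le {a b : Fin d → A} (h : GLRel a b) :
    AddSubgroup.closure (Set.range b) ≤ AddSubgroup.closure (Set.range a) := by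
  obtain ⟨N, -, rfl⟩ := h
  rw [AddSubgroup.closure_le]
  rintro _ ⟨i, rfl⟩
  exact sum_mem fun j _ => zsmul_mem (AddSubgroup.subset_closure (Set.mem_range_self j)) _

theorem GLRel.closure_eq {a b : Fin d → A} (h : GLRel a b) :
    AddSubgroup.closure (Set.range b) = AddSubgroup.closure (Set.range a) :=
  le_antisymm h.closure_le h.symm.closure_le

theorem GLRel.update_add (a : Fin d → A) {i j : Fin d} (hij : i ≠ j) (t : ℤ) :
    GLRel a (Function.update a i (a i + t • a j)) := by
  refine ⟨Matrix.transvection i j t, by simp [Matrix.det_transvection_of_ne i j hij], ?_⟩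
  ext k
  rcases eq_or_ne k i with rfl | hk
  · simp [Matrix.transvection, Matrix.one_apply, Matrix.single_apply, add_smul, ite_smul,
      Finset.sum_add_distrib]
  · simp [Matrix.transvection, Matrix.one_apply, ite_smul, hk, hk.symm]

theorem GLRel.update_neg (a : Fin d → A) (i : Fin d) :
    GLRel a (Function.update a i (-a i)) := by
  refine ⟨Matrix.diagonal (Function.update 1 i (-1)), ?_, ?_⟩
  · rw [Matrix.det_diagonal, Finset.prod_update_of_mem (Finset.mem_univ i)]
    simp
  · ext k
    rcases eq_or_ne k i with rfl | hk
    · simp [Matrix.diagonal_apply, ite_smul]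
    · simp [Matrix.diagonal_apply, ite_smul, hk]

theorem GLRel.perm (a : Fin d → A) (σ : Equiv.Perm (Fin d)) : GLRel a (a ∘ σ) := by
  refine ⟨σ.permMatrix ℤ, ?_, ?_⟩
  · rw [Matrix.det_permutation]; exact (Units.isUnit (Equiv.Perm.sign σ)).map (Int.castRingHom ℤ)
  · ext i
    simp [Equiv.Perm.permMatrix, PEquiv.toMatrix_apply, ite_smul, Equiv.toPEquiv_apply]

/-- Apply a move to the tail, and add a combination of the tail to the head. -/
theorem GLRel.cons {s t : Fin d → A} (h : GLRel s t) (x : A) (k : Fin d → ℤ) :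
    GLRel (Fin.cons x s : Fin (d + 1) → A) (Fin.cons (x + ∑ j, k j • s j) t) := by
  obtain ⟨N, hN, rfl⟩ := h
  refine ⟨Matrix.of (Fin.cons (Fin.cons 1 k) fun i => Fin.cons 0 (N i)), ?_, ?_⟩
  · rw [Matrix.det_succ_column_zero, Fin.sum_univ_succ]
    have hsub : (Matrix.of (Fin.cons (Fin.cons 1 k) fun i => Fin.cons 0 (N i)) :
        Matrix (Fin (d + 1)) (Fin (d + 1)) ℤ).submatrix Fin.succ Fin.succ = N := by
      ext i j
      simp
    simpa [hsub] using hN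
  · ext i
    refine Fin.cases ?_ (fun i => ?_) i <;> simp [Fin.sum_univ_succ]

end GLRel

/-- A finitely generated abelian group of exponent `n` (with `n = 0` when it is infinite) maps onto
`ZMod n`. For a finite group, the character group is isomorphic to the group, so it contains a
character of order `n`, whose image is cyclic of order `n`. -/
theorem exists_character {A : Type*} [AddCommGroup A] (hA : AddGroup.FG A) :
    ∃ (n : ℕ) (χ : A →+ ZMod n), Function.Surjective χ ∧ ∀ x : A, n • x = 0 := by
  by_cases hfin : Finite A
  · have : NeZero (Monoid.exponent (Multiplicative A)) := ⟨Monoid.exponent_ne_zero_of_finite⟩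
    obtain ⟨e⟩ := CommGroup.monoidHom_mulEquiv_of_hasEnoughRootsOfUnity (Multiplicative A) ℂ
    obtain ⟨g, hg⟩ := Monoid.exists_orderOf_eq_exponent
      (Monoid.ExponentExists.of_finite (G := Multiplicative A))
    set f := e.symm g with hf
    have hfo : orderOf f = Monoid.exponent (Multiplicative A) := by
      rw [← hg, hf, MulEquiv.orderOf_eq]
    have hr : Finite f.range := Finite.of_surjective _ f.rangeRestrict_surjective
    have hc : IsCyclic f.range := inferInstance
    have hcard : Nat.card f.range = Monoid.exponent (Multiplicative A) := by
      apply Nat.dvd_antisymm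
      · obtain ⟨⟨_, y, rfl⟩, hz⟩ := IsCyclic.exists_generator (α := f.range)
        rw [← orderOf_eq_card_of_forall_mem_zpowers hz]
        apply orderOf_dvd_of_pow_eq_one
        ext1
        change f y ^ _ = 1
        rw [← map_pow, Monoid.pow_exponent_eq_one, map_one]
      · rw [← hfo]
        apply orderOf_dvd_of_pow_eq_one
        refine MonoidHom.ext fun x => ?_
        have := pow_card_eq_one' (x := (⟨f x, x, rfl⟩ : f.range))
        simpa using congrArg Subtype.val this
    let g' := (zmodAddCyclicAddEquiv (G := Additive f.range) inferInstance).symm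
    let χ : A →+ ZMod (Nat.card (Additive f.range)) :=
      g'.toAddMonoidHom.comp (MonoidHom.toAdditive f.rangeRestrict)
    refine ⟨_, χ, ?_, ?_⟩
    · exact g'.surjective.comp f.rangeRestrict_surjective
    · intro x
      have : Nat.card (Additive f.range) = Monoid.exponent (Multiplicative A) := hcard
      rw [this]
      exact Monoid.pow_exponent_eq_one (Multiplicative.ofAdd x)
  · obtain ⟨r, ι, _, p, hp, e, ⟨φ⟩⟩ := AddCommGroup.equiv_free_prod_directSum_zmod A
    rcases r with _ | r
    · have (i : ι) : NeZero (p i ^ e i) := ⟨pow_ne_zero _ (hp i).ne_zero⟩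
      have : Finite (DirectSum ι fun i => ZMod (p i ^ e i)) :=
        Finite.of_equiv _ DFinsupp.equivFunOnFintype.symm
      have : Finite (Fin 0 →₀ ℤ) := Finite.of_subsingleton
      exact absurd (Finite.of_equiv _ φ.symm.toEquiv) hfin
    · let χ : A →+ ℤ := (Finsupp.applyAddHom (0 : Fin (r + 1))).comp
        ((AddMonoidHom.fst _ _).comp φ.toAddMonoidHom)
      refine ⟨0, χ, fun (z : ℤ) => ⟨φ.symm (Finsupp.single 0 z, 0), ?_⟩, by simp⟩
      change (φ (φ.symm (Finsupp.single 0 z, 0))).1 0 = z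
      rw [φ.apply_symm_apply]
      exact Finsupp.single_eq_same

theorem mem_closure_range {A : Type*} [AddCommGroup A] {d : ℕ} {a : Fin d → A} {x : A} :
    x ∈ AddSubgroup.closure (Set.range a) ↔ ∃ k : Fin d → ℤ, ∑ j, k j • a j = x := by
  rw [← Submodule.mem_span_range_iff_exists_fun ℤ, ← Submodule.span_int_eq_addSubgroupClosure,
    Submodule.mem_toAddSubgroup]

/-- Euclid's algorithm: an integer tuple can be reduced to a single nonzero entry. -/
theorem exists_glRel_single {d : ℕ} (w : Fin (d + 1) → ℤ) :
    ∃ g : ℤ, GLRel w (Pi.single 0 g) := by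
  induction hs : ∑ i, (w i).natAbs using Nat.strong_induction_on generalizing w with
  | _ s ih =>
  by_cases h : ∃ i j, i ≠ j ∧ w j ≠ 0 ∧ (w j).natAbs ≤ (w i).natAbs
  · obtain ⟨i, j, hij, hj, hle⟩ := h
    -- replacing `w i` by its remainder modulo `w j` decreases the sum of absolute values
    have hrel := GLRel.update_add w hij (-(w i / w j))
    have hmod : w i + -(w i / w j) • w j = w i % w j := by
      rw [Int.emod_def]; simp only [smul_eq_mul]; ring
    rw [hmod] at hrel
    have hlt : (w i % w j).natAbs < (w i).natAbs := by
      have h1 := Int.emod_nonneg (w i) hj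
      have h2 := Int.emod_lt_abs (w i) hj
      rw [Int.abs_eq_natAbs] at h2
      omega
    obtain ⟨g, hg⟩ := ih _ (by
      rw [← hs]
      refine Finset.sum_lt_sum (fun k _ => ?_) ⟨i, Finset.mem_univ i, by simpa using hlt⟩
      rcases eq_or_ne k i with rfl | hk
      · simpa using hlt.le
      · simp [hk]) (Function.update w i (w i % w j)) rfl
    exact ⟨g, hrel.trans hg⟩
  · push Not at h
    obtain ⟨i, hi⟩ : ∃ i, ∀ j, j ≠ i → w j = 0 := by
      by_cases h0 : ∃ i, w i ≠ 0
      · obtain ⟨i, hi⟩ := h0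
        refine ⟨i, fun j hj => ?_⟩
        by_contra hj0
        have h1 := h i j hj.symm hj0
        have h2 := h j i hj hi
        omega
      · push Not at h0
        exact ⟨0, fun j _ => h0 j⟩
    refine ⟨w i, ?_⟩
    convert GLRel.perm w (Equiv.swap 0 i) using 1
    ext k
    rcases eq_or_ne k 0 with rfl | hk
    · simp
    · have : Equiv.swap 0 i k ≠ i := by
        intro h
        apply hk
        rw [← Equiv.swap_apply_left 0 i] at h
        exact (Equiv.swap 0 i).injective h
      simp [hk, hi _ this]

theorem exists_dvd_of_glRel_single {d : ℕ} {w : Fin (d + 1) → ℤ} {h : ℤ}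
    (hw : GLRel w (Pi.single 0 h)) (i : Fin (d + 1)) : h ∣ w i := by
  have hmem : w i ∈ AddSubgroup.closure (Set.range (Pi.single 0 h : Fin (d + 1) → ℤ)) :=
    hw.closure_eq ▸ AddSubgroup.subset_closure (Set.mem_range_self i)
  obtain ⟨k, hk⟩ := mem_closure_range.1 hmem
  refine ⟨k 0, ?_⟩
  rw [← hk, Fin.sum_univ_succ]
  simp [mul_comm]

/-- In length at least `2`, every tuple generating `ZMod n` can be moved to `(1, 0, …, 0)`.
After reducing to `(g, 0, …, 0)`, the second entry may be replaced by `n`; Euclid's algorithm on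
`(g, n, 0, …, 0)` then produces `gcd(g, n) = 1` up to sign. This fails in length `1`, where only
the sign of a unit can be changed. -/
theorem glRel_single_one {n d : ℕ} (v : Fin (d + 2) → ZMod n)
    (hv : AddSubgroup.closure (Set.range v) = ⊤) : GLRel v (Pi.single 0 1) := by
  have key (w : Fin (d + 2) → ℤ) {g : ℤ} (hg : GLRel w (Pi.single 0 g)) :
      GLRel (fun i => (w i : ZMod n)) (Pi.single 0 (g : ZMod n)) := by
    have hsingle : Pi.single 0 (g : ZMod n) =
        Int.castAddHom (ZMod n) ∘ (Pi.single 0 g : Fin (d + 2) → ℤ) := by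
      ext i
      rcases eq_or_ne i 0 with rfl | hi
      · simp
      · simp [hi]
    rw [hsingle]
    exact hg.map _
  choose w hw using fun i => ZMod.intCast_surjective (v i)
  obtain ⟨g, hg⟩ := exists_glRel_single w
  obtain ⟨h, hh⟩ := exists_glRel_single (Function.update (Pi.single 0 g : Fin (d + 2) → ℤ) 1 n)
  have hhn : h ∣ n := by simpa using exists_dvd_of_glRel_single hh 1
  have hvh : GLRel v (Pi.single 0 (h : ZMod n)) := by
    have h1 := key _ hg
    have h2 := key _ hh
    rw [funext hw] at h1
    refine h1.trans ?_
    convert h2 using 1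
    ext i
    rcases eq_or_ne i 0 with rfl | hi
    · simp
    · rcases eq_or_ne i 1 with rfl | hi'
      · simp
      · simp [hi, hi']
  have h1 : (1 : ZMod n) ∈
      AddSubgroup.closure (Set.range (Pi.single 0 (h : ZMod n) : Fin (d + 2) → ZMod n)) := by
    rw [hvh.closure_eq, hv]; trivial
  obtain ⟨k, hk⟩ := mem_closure_range.1 h1
  rw [Fin.sum_univ_succ] at hk
  have hk' : ((k 0 * h : ℤ) : ZMod n) = (1 : ℤ) := by simpa using hk
  rw [ZMod.intCast_eq_intCast_iff_dvd_sub] at hk'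
  have hunit : IsUnit h := by
    rw [isUnit_iff_dvd_one]
    have := (hhn.trans hk').add (Dvd.intro_left (k 0) rfl)
    simpa using this
  rcases Int.isUnit_iff.1 hunit with rfl | rfl
  · simpa using hvh
  · refine hvh.trans ?_
    convert GLRel.update_neg (Pi.single 0 ((-1 : ℤ) : ZMod n)) (0 : Fin (d + 2)) using 1
    ext i
    rcases eq_or_ne i 0 with rfl | hi
    · simp
    · simp [hi]

/-- If `χ` takes the generating tuple `a` to `(1, 0, …, 0)`, then the tail of `a` generates the
kernel of `χ`: in an element of the kernel, the coefficient of `a 0` is divisible by `n`,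
and `n` annihilates the group. -/
theorem exists_tail_ker {A : Type*} [AddCommGroup A] {n d : ℕ} (χ : A →+ ZMod n)
    (hn : ∀ x : A, n • x = 0) (a : Fin (d + 1) → A)
    (ha : AddSubgroup.closure (Set.range a) = ⊤) (hχ : χ ∘ a = Pi.single 0 1) :
    ∃ t : Fin d → χ.ker, a = Fin.cons (a 0) (χ.ker.subtype ∘ t) ∧
      AddSubgroup.closure (Set.range t) = ⊤ := by
  have h0 : χ (a 0) = 1 := by simpa using congrFun hχ 0
  have hs (i : Fin d) : χ (a i.succ) = 0 := by simpa using congrFun hχ i.succ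
  refine ⟨fun i => ⟨a i.succ, hs i⟩, ?_, ?_⟩
  · ext i
    refine Fin.cases ?_ (fun i => ?_) i <;> simp
  · rw [eq_top_iff]
    rintro ⟨x, hx⟩ -
    obtain ⟨k, rfl⟩ := mem_closure_range.1 (ha ▸ AddSubgroup.mem_top x)
    refine mem_closure_range.2 ⟨fun i => k i.succ, ?_⟩
    ext1
    rw [AddMonoidHom.mem_ker, Fin.sum_univ_succ] at hx
    have hk : (k 0 : ZMod n) = 0 := by simpa [h0, hs] using hx
    obtain ⟨q, hq⟩ := (ZMod.intCast_zmod_eq_zero_iff_dvd _ _).1 hk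
    have : k 0 • a 0 = 0 := by
      rw [hq, mul_comm, mul_smul, natCast_zsmul, hn, smul_zero]
    change _ = ∑ j, k j • a j
    rw [Fin.sum_univ_succ, this]
    simp

/-- Two generating tuples are, up to `GL(ℤ)`-moves, of the form `(c₀, …, c_d)` and
`(c₀, …, c_{d-1}, u • c_d)`, where the coefficients of every relation among the `cⱼ` are
divisible by an integer `m` annihilating `c_d`. -/
theorem exists_normal_form {d : ℕ} : ∀ {A : Type u} [AddCommGroup A] (a b : Fin (d + 1) → A),
    AddSubgroup.closure (Set.range a) = ⊤ → AddSubgroup.closure (Set.range b) = ⊤ →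
    ∃ (c : Fin (d + 1) → A) (u : ℤ) (m : ℕ), GLRel a c ∧
      GLRel b (Function.update c (Fin.last d) (u • c (Fin.last d))) ∧
      m • c (Fin.last d) = 0 ∧
      ∀ k : Fin (d + 1) → ℤ, ∑ j, k j • c j = 0 → ∀ j, (m : ℤ) ∣ k j := by
  induction d with
  | zero =>
    intro A _ a b ha hb
    obtain ⟨k, hk⟩ := mem_closure_range.1 (ha ▸ AddSubgroup.mem_top (b 0))
    refine ⟨a, k 0, addOrderOf (a 0), .refl a, ?_, addOrderOf_nsmul_eq_zero _, ?_⟩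
    · convert GLRel.refl b using 1
      ext i
      rw [Fin.eq_zero i, ← hk]
      simp
    · intro k hk j
      rw [Fin.eq_zero j, addOrderOf_dvd_iff_zsmul_eq_zero]
      simpa using hk
  | succ d ih =>
    intro A _ a b ha hb
    have hfg : AddGroup.FG A :=
      AddGroup.fg_iff.2 ⟨Set.range a, ha, Set.finite_range a⟩
    obtain ⟨n, χ, hχ, hn⟩ := exists_character hfg
    have gen (f : Fin (d + 2) → A) (hf : AddSubgroup.closure (Set.range f) = ⊤) :
        ∃ f', GLRel f f' ∧ ∃ t : Fin (d + 1) → χ.ker, f' = Fin.cons (f' 0) (χ.ker.subtype ∘ t) ∧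
          AddSubgroup.closure (Set.range t) = ⊤ ∧ χ (f' 0) = 1 := by
      have : AddSubgroup.closure (Set.range (χ ∘ f)) = ⊤ := by
        rw [Set.range_comp, ← AddMonoidHom.map_closure, hf, ← AddMonoidHom.range_eq_map,
          AddMonoidHom.range_eq_top.2 hχ]
      obtain ⟨f', hff', hf'⟩ := (glRel_single_one _ this).lift χ
      obtain ⟨t, ht, ht'⟩ := exists_tail_ker χ hn f' (hff'.closure_eq.trans hf) hf'
      exact ⟨f', hff', t, ht, ht', by simpa using congrFun hf' 0⟩
    obtain ⟨a', haa', s, has, hs, ha0⟩ := gen a ha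
    obtain ⟨b', hbb', t, hbt, ht, hb0⟩ := gen b hb
    obtain ⟨c, u, m, hsc, htc, hm, hrel⟩ := ih s t hs ht
    have hdiff : a' 0 - b' 0 ∈ χ.ker := by simp [AddMonoidHom.mem_ker, ha0, hb0]
    obtain ⟨k, hk⟩ := mem_closure_range.1 (ht ▸ AddSubgroup.mem_top (⟨_, hdiff⟩ : χ.ker))
    have hk' : ∑ j, k j • (t j : A) = a' 0 - b' 0 := by
      simpa using congrArg Subtype.val hk
    -- `n • c_last = 0` is a relation among the `c j`, so `m ∣ n`
    have hmn : (m : ℤ) ∣ n := by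
      have := hrel (Pi.single (Fin.last d) n) (by
        rw [Finset.sum_eq_single (Fin.last d)]
        · ext1
          simpa using hn _
        · intro j _ hj; simp [hj]
        · simp) (Fin.last d)
      simpa using this
    refine ⟨Fin.cons (a' 0) (χ.ker.subtype ∘ c), u, m, ?_, ?_, ?_, ?_⟩
    · refine haa'.trans ?_
      rw [has]
      simpa using (hsc.map χ.ker.subtype).cons (a' 0) 0
    · refine hbb'.trans ?_
      rw [hbt]
      -- the two heads differ by an element of the kernel, so they can be made equal
      convert (htc.map χ.ker.subtype).cons (b' 0) k using 1
      rw [← Fin.succ_last, ← Fin.cons_update]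
      congr 1
      · simp [hk']
      · ext j
        rcases eq_or_ne j (Fin.last d) with rfl | hj
        · simp
        · simp [hj]
    · rw [← Fin.succ_last]
      simpa using congrArg Subtype.val hm
    · intro l hl
      rw [Fin.sum_univ_succ] at hl
      have hl0 : (l 0 : ZMod n) = 0 := by
        simpa [ha0, AddMonoidHom.mem_ker.1 (c _).2] using congrArg χ hl
      have hdvd := (ZMod.intCast_zmod_eq_zero_iff_dvd _ _).1 hl0
      have h0 : l 0 • a' 0 = 0 := by
        obtain ⟨q, hq⟩ := hdvd
        rw [hq, mul_comm, mul_smul, natCast_zsmul, hn, smul_zero]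
      refine Fin.cases (hmn.trans hdvd) (hrel (fun j => l j.succ) ?_)
      ext1
      simpa [h0] using hl

/-- Acting on a tuple by an integer matrix multiplies its wedge by the determinant. -/
theorem ιMulti_act {A : Type*} [AddCommGroup A] {d : ℕ} (N : Matrix (Fin d) (Fin d) ℤ)
    (a : Fin d → A) :
    ExteriorAlgebra.ιMulti ℤ d (fun i => ∑ j, N i j • a j) =
      N.det • ExteriorAlgebra.ιMulti ℤ d a := by
  let e := Pi.basisFun ℤ (Fin d)
  let L : (Fin d → ℤ) →ₗ[ℤ] A := Fintype.linearCombination ℤ a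
  have key : (ExteriorAlgebra.ιMulti ℤ d).compLinearMap L =
      (LinearMap.toSpanSingleton ℤ _ (ExteriorAlgebra.ιMulti ℤ d a)).compAlternatingMap e.det := by
    refine e.ext_alternating fun v hv => ?_
    let σ : Equiv.Perm (Fin d) := Equiv.ofBijective v (Finite.injective_iff_bijective.1 hv)
    change ExteriorAlgebra.ιMulti ℤ d (fun i => L (e (σ i))) = e.det (e ∘ σ) • ExteriorAlgebra.ιMulti ℤ d a
    have h1 : (fun i => L (e (σ i))) = a ∘ σ := by
      ext i; simp [L, e, Fintype.linearCombination_apply, Pi.single_apply, ite_smul]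
    rw [h1, AlternatingMap.map_perm, AlternatingMap.map_perm, Module.Basis.det_self]
    simp
  have h : ExteriorAlgebra.ιMulti ℤ d (fun i => L (N i)) =
      e.det N • ExteriorAlgebra.ιMulti ℤ d a := congrArg (fun f => f N) key
  simp only [e, L, Pi.basisFun_det, Fintype.linearCombination_apply] at h
  exact h

theorem GLRel.wedge {A : Type*} [AddCommGroup A] {d : ℕ} {a b : Fin d → A} (h : GLRel a b) :
    ExteriorAlgebra.ιMulti ℤ d a = ExteriorAlgebra.ιMulti ℤ d b ∨
        ExteriorAlgebra.ιMulti ℤ d a = - ExteriorAlgebra.ιMulti ℤ d b := by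
  obtain ⟨N, hN, rfl⟩ := h
  rw [ιMulti_act]
  rcases Int.isUnit_iff.1 hN with h | h <;> simp [h]

/-- If all relations among the generators `cⱼ` have coefficients divisible by `m`, then
`c₁ ∧ ⋯ ∧ c_d` has order divisible by `m`. Such a group has a homomorphism `φ` to `(ZMod m)^d`
taking `cⱼ` to the `j`-th unit vector, and `det ∘ φ` is an alternating form with value `1` on `c`. -/
theorem dvd_of_wedge_eq {A : Type*} [AddCommGroup A] {d : ℕ} (c : Fin d → A)
    (hc : AddSubgroup.closure (Set.range c) = ⊤) (m : ℕ)
    (hrel : ∀ k : Fin d → ℤ, ∑ j, k j • c j = 0 → ∀ j, (m : ℤ) ∣ k j) (u v : ℤ)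
    (h : u • ExteriorAlgebra.ιMulti ℤ d c = v • ExteriorAlgebra.ιMulti ℤ d c) :
    (m : ℤ) ∣ u - v := by
  let L : (Fin d → ℤ) →ₗ[ℤ] A := Fintype.linearCombination ℤ c
  have hL : Function.Surjective L := fun x => by
    obtain ⟨k, hk⟩ := mem_closure_range.1 (hc ▸ AddSubgroup.mem_top x)
    exact ⟨k, by simpa [L, Fintype.linearCombination_apply] using hk⟩
  let P : (Fin d → ℤ) →ₗ[ℤ] (Fin d → ZMod m) :=
    ((Int.castAddHom (ZMod m)).compLeft (Fin d)).toIntLinearMap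
  have hker : LinearMap.ker L ≤ LinearMap.ker P := fun k hk => by
    ext j
    exact (ZMod.intCast_zmod_eq_zero_iff_dvd _ _).2
      (hrel k (by simpa [L, Fintype.linearCombination_apply] using hk) j)
  let φ : A →ₗ[ℤ] (Fin d → ZMod m) :=
    ((LinearMap.ker L).liftQ P hker).comp (L.quotKerEquivOfSurjective hL).symm.toLinearMap
  have hφ (k : Fin d → ℤ) : φ (L k) = P k := by
    have : (L.quotKerEquivOfSurjective hL).symm (L k) = (LinearMap.ker L).mkQ k := by
      rw [LinearEquiv.symm_apply_eq]; rfl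
    simp [φ, this]
  have hφc : (fun i => φ (c i)) = (1 : Matrix (Fin d) (Fin d) (ZMod m)) := by
    ext i j
    have : c i = L (Pi.single i 1) := by simp [L, Fintype.linearCombination_apply_single]
    rw [this, hφ]
    rcases eq_or_ne i j with rfl | hij
    · simp [P]
    · simp [P, hij, hij.symm]
  let D : A [⋀^Fin d]→ₗ[ℤ] ZMod m :=
    { toFun := fun v => Matrix.det (fun i => φ (v i))
      map_update_add' := @fun inst v i x y => by
        obtain rfl := Subsingleton.elim inst (instDecidableEqFin d)
        have hup (z : A) : (fun j => φ (Function.update v i z j)) =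
            Function.update (φ ∘ v) i (φ z) := Function.comp_update φ v i z
        simp only [hup, map_add]
        exact Matrix.detRowAlternating.map_update_add _ _ _ _
      map_update_smul' := @fun inst v i k x => by
        obtain rfl := Subsingleton.elim inst (instDecidableEqFin d)
        have hup (z : A) : (fun j => φ (Function.update v i z j)) =
            Function.update (φ ∘ v) i (φ z) := Function.comp_update φ v i z
        simp only [hup, map_smul]
        rw [← Int.cast_smul_eq_zsmul (ZMod m), ← Int.cast_smul_eq_zsmul (ZMod m)]
        exact Matrix.detRowAlternating.map_update_smul _ _ _ _
      map_eq_zero_of_eq' := fun v i j hv hij =>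
        Matrix.det_zero_of_row_eq hij (congrArg φ hv) }
  have hD : D c = 1 := by
    change Matrix.det (fun i => φ (c i)) = 1
    rw [hφc, Matrix.det_one]
  have := congrArg (ExteriorAlgebra.liftAlternating (R := ℤ) (Pi.single d D)) h
  simp only [map_smul, ExteriorAlgebra.liftAlternating_apply_ιMulti, Pi.single_eq_same, hD] at this
  rw [← ZMod.intCast_zmod_eq_zero_iff_dvd]
  simpa [sub_eq_zero] using this

theorem eq_or_neg_eq_of_pm {G : Type*} [AddCommGroup G] {a b x y : G}
    (hx : a = x ∨ a = -x) (hy : b = y ∨ b = -y) (h : a = b ∨ a = -b) : x = y ∨ -x = y := by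
  rcases hx with rfl | rfl <;> rcases hy with rfl | rfl <;> rcases h with h | h <;>
    simp_all [neg_eq_iff_eq_neg]

/-- For two generating `d`-tuples `a`, `b` of an abelian group `A`, there is a
matrix `N ∈ GL_d(ℤ)` (an integer matrix of determinant `±1`) with
`bᵢ = Σ_j n_{ij}·a_j` for all `i` if and only if
`a₁ ∧ ⋯ ∧ a_d = ± b₁ ∧ ⋯ ∧ b_d` in `⋀^d(A)`. -/
theorem exists_glZ_matrix_iff_wedge_eq_pm {A : Type*} [AddCommGroup A] {d : ℕ}
    (a b : Fin d → A)
    (ha : AddSubgroup.closure (Set.range a) = ⊤)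
    (hb : AddSubgroup.closure (Set.range b) = ⊤) :
    (∃ N : Matrix (Fin d) (Fin d) ℤ, (N.det = 1 ∨ N.det = -1) ∧
        ∀ i, b i = ∑ j, N i j • a j) ↔
      (ExteriorAlgebra.ιMulti ℤ d a = ExteriorAlgebra.ιMulti ℤ d b ∨
        ExteriorAlgebra.ιMulti ℤ d a = - ExteriorAlgebra.ιMulti ℤ d b) := by
  suffices h : (ExteriorAlgebra.ιMulti ℤ d a = ExteriorAlgebra.ιMulti ℤ d b ∨
      ExteriorAlgebra.ιMulti ℤ d a = - ExteriorAlgebra.ιMulti ℤ d b) → GLRel a b by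
    refine ⟨fun ⟨N, hN, hab⟩ => GLRel.wedge ⟨N, Int.isUnit_iff.2 hN, funext hab⟩, fun hw => ?_⟩
    obtain ⟨N, hN, hab⟩ := h hw
    exact ⟨N, Int.isUnit_iff.1 hN, congrFun hab⟩
  intro hw
  rcases d with _ | d
  · rw [Subsingleton.elim a b]; exact .refl b
  obtain ⟨c, u, m, hac, hbc, hm, hrel⟩ := exists_normal_form a b ha hb
  refine hac.trans (GLRel.trans ?_ hbc.symm)
  have hc := hac.closure_eq.trans ha
  have hu : ExteriorAlgebra.ιMulti ℤ (d + 1)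
      (Function.update c (Fin.last d) (u • c (Fin.last d))) =
      u • ExteriorAlgebra.ιMulti ℤ (d + 1) c := by
    rw [AlternatingMap.map_update_smul, Function.update_eq_self]
  have h1 := hac.wedge
  have h2 := hbc.wedge
  rw [hu] at h2
  have h3 : (1 : ℤ) • ExteriorAlgebra.ιMulti ℤ (d + 1) c = u • ExteriorAlgebra.ιMulti ℤ (d + 1) c ∨
      (-1 : ℤ) • ExteriorAlgebra.ιMulti ℤ (d + 1) c =
        u • ExteriorAlgebra.ιMulti ℤ (d + 1) c := by
    rw [one_smul, neg_one_smul]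
    exact eq_or_neg_eq_of_pm h1 h2 hw
  rcases h3 with h3 | h3
  · obtain ⟨q, hq⟩ := dvd_of_wedge_eq c hc m hrel _ _ h3
    have : u • c (Fin.last d) = c (Fin.last d) := by
      have hu' : u = 1 - q * m := by linarith
      rw [hu', sub_smul, mul_smul, natCast_zsmul, hm]
      simp
    rw [this, Function.update_eq_self]
    exact .refl c
  · obtain ⟨q, hq⟩ := dvd_of_wedge_eq c hc m hrel _ _ h3
    have : u • c (Fin.last d) = -c (Fin.last d) := by
      have hu' : u = -1 - q * m := by linarith
      rw [hu', sub_smul, mul_smul, natCast_zsmul, hm]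
      simp
    rw [this]
    exact .update_neg c _
end
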